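/- arXiv:1502.01840 — 5 statements merged into one kernel-verified Lean document; each statement's English description precedes it below -/
import Mathlib

section
/- Under assumptions (C1)-(C3) on the family (A_ε), if ψ_ε → ψ_0 weakly in X and τ_ε → τ_0 > 0, then T^ε_{τ_ε} ψ_ε → T^0_{τ_0} ψ_0 strongly in X. -/
open MeasureTheory Filter
open scoped RealInnerProductSpace

/-!
Let `K = A⁻¹`, a positive bounded operator. Two facts give the convergence of
`T^ε_{τ_ε} ψ_ε = T^ε_{τ_ε} (ψ_ε - ψ_0) + T^ε_{τ_ε} ψ_0`.

For the first summand, differentiating `‖K u‖² + 2s⟪u, K u⟫ + 2s²‖u‖²` along an orbit `u = T_s w`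
gives the smoothing estimate `t ‖T_t w‖ ≤ ‖K w‖`. Inversion reverses the order of forms, so
`m₀ K_ε ≤ K_0` with `K_0` compact, and the family `K_ε` maps weakly null families to null families.

For the second, `d/ds T^ε_{t-s} K_ε T^0_s K_0 y = T^ε_{t-s} (K_0 - K_ε) T^0_s y`. Since
`K_ε → K_0` uniformly on the compact orbit of `y`, the semigroups converge on the dense range of
`K_0²`, hence everywhere.
-/

open Set Topology

section StrongConvergence

variable {I X Y : Type*} [NormedAddCommGroup X] [NormedSpace ℝ X]
  [NormedAddCommGroup Y] [NormedSpace ℝ Y] {l : Filter I} {F : I → X →L[ℝ] Y} {F₀ : X →L[ℝ] Y}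
  {C : ℝ}

theorem tendsto_clm_apply_zero (hF : ∀ᶠ i in l, ‖F i‖ ≤ C) {x : I → X}
    (hx : Tendsto x l (𝓝 0)) : Tendsto (fun i => F i (x i)) l (𝓝 0) := by
  refine squeeze_zero_norm' (hF.mono fun i hi => (F i).le_of_opNorm_le hi (x i)) ?_
  simpa using hx.norm.const_mul C

theorem tendsto_clm_apply (hF : ∀ᶠ i in l, ‖F i‖ ≤ C) {x : I → X} {x₀ : X} {y : Y}
    (hFx : Tendsto (fun i => F i x₀) l (𝓝 y)) (hx : Tendsto x l (𝓝 x₀)) :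
    Tendsto (fun i => F i (x i)) l (𝓝 y) := by
  simpa using (tendsto_clm_apply_zero hF (tendsto_sub_nhds_zero_iff.2 hx)).add hFx

theorem tendsto_clm_apply_of_denseRange {α : Type*} {d : α → X} (hd : DenseRange d)
    (hF : ∀ᶠ i in l, ‖F i‖ ≤ C)
    (hFd : ∀ a, Tendsto (fun i => F i (d a)) l (𝓝 (F₀ (d a)))) (x : X) :
    Tendsto (fun i => F i x) l (𝓝 (F₀ x)) := by
  rw [Metric.tendsto_nhds]
  intro ε hε
  have hlim : Tendsto (fun z => C * ‖x - z‖ + ‖F₀ (x - z)‖) (𝓝 x) (𝓝 0) := by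
    have : Continuous fun z => C * ‖x - z‖ + ‖F₀ (x - z)‖ := by fun_prop
    simpa using this.tendsto x
  obtain ⟨a, ha⟩ := hd.exists_mem_open isOpen_interior
    ⟨x, mem_interior_iff_mem_nhds.2 (hlim.eventually_lt_const (half_pos hε))⟩
  have hsmall : C * ‖x - d a‖ + ‖F₀ (x - d a)‖ < ε / 2 :=
    (interior_subset ha : d a ∈ {z | C * ‖x - z‖ + ‖F₀ (x - z)‖ < ε / 2})
  filter_upwards [hF, Metric.tendsto_nhds.1 (hFd a) (ε / 2) (half_pos hε)] with i hi hia
  rw [dist_eq_norm] at hia ⊢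
  calc ‖F i x - F₀ x‖
      = ‖F i (x - d a) - F₀ (x - d a) + (F i (d a) - F₀ (d a))‖ := by
        simp only [map_sub]; congr 1; abel
    _ ≤ ‖F i (x - d a)‖ + ‖F₀ (x - d a)‖ + ‖F i (d a) - F₀ (d a)‖ :=
        (norm_add_le _ _).trans (add_le_add_left (norm_sub_le _ _) _)
    _ ≤ C * ‖x - d a‖ + ‖F₀ (x - d a)‖ + ‖F i (d a) - F₀ (d a)‖ := by
        gcongr; exact (F i).le_of_opNorm_le hi _
    _ < ε := by linarith [hsmall]

theorem tendstoUniformlyOn_clm_of_isCompact (hF : ∀ᶠ i in l, ‖F i‖ ≤ C)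
    (hFx : ∀ x, Tendsto (fun i => F i x) l (𝓝 (F₀ x))) {S : Set X} (hS : IsCompact S) :
    TendstoUniformlyOn (fun i x => F i x) F₀ l S := by
  rw [← tendstoLocallyUniformlyOn_iff_tendstoUniformlyOn_of_compact hS,
    tendstoLocallyUniformlyOn_iff_forall_tendsto]
  intro x _
  have hsnd : Tendsto Prod.snd (l ×ˢ 𝓝[S] x) (𝓝 x) := tendsto_snd.mono_right nhdsWithin_le_nhds
  have hjoint : Tendsto (fun p : I × X => F p.1 p.2) (l ×ˢ 𝓝[S] x) (𝓝 (F₀ x)) :=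
    tendsto_clm_apply (F := fun p : I × X => F p.1) (tendsto_fst.eventually hF)
      ((hFx x).comp tendsto_fst) hsnd
  exact (((F₀.continuous.tendsto x).comp hsnd).prodMk_nhds hjoint).mono_right
    (nhds_le_uniformity _)

theorem hasDerivWithinAt_clm_apply_of_strong {F : ℝ → X →L[ℝ] Y} {v : ℝ → X} {v' : X} {w : Y}
    {s : Set ℝ} {a : ℝ} (hF : ∀ᶠ r in 𝓝[s] a, ‖F r‖ ≤ C)
    (hcont : ∀ x, ContinuousWithinAt (fun r => F r x) s a)
    (hFv : HasDerivWithinAt (fun r => F r (v a)) w s a) (hv : HasDerivWithinAt v v' s a) :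
    HasDerivWithinAt (fun r => F r (v r)) (w + F a v') s a := by
  rw [hasDerivWithinAt_iff_tendsto_slope] at hFv hv ⊢
  have hle : 𝓝[s \ {a}] a ≤ 𝓝[s] a := nhdsWithin_mono a sdiff_subset
  refine (hFv.add (tendsto_clm_apply (hF.filter_mono hle) ((hcont v').mono_left hle) hv)).congr
    fun r => ?_
  simp only [slope_def_module, map_smul, map_sub, ← smul_add]
  congr 1
  abel

end StrongConvergence

section WeakConvergence

variable {X : Type*} [NormedAddCommGroup X] [InnerProductSpace ℝ X] [CompleteSpace X]

theorem exists_norm_le_of_tendsto_inner {w : ℕ → X} {w₀ : X}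
    (hw : ∀ φ, Tendsto (fun n => ⟪w n, φ⟫) atTop (𝓝 ⟪w₀, φ⟫)) : ∃ C, ∀ n, ‖w n‖ ≤ C := by
  have hpointwise : ∀ φ, ∃ C, ∀ n, ‖innerSL ℝ (w n) φ‖ ≤ C := fun φ =>
    let ⟨C, hC⟩ := (hw φ).norm.bddAbove_range
    ⟨C, fun n => hC ⟨n, rfl⟩⟩
  simpa only [innerSL_apply_norm] using banach_steinhaus hpointwise

theorem tendsto_compact_apply_of_tendsto_inner {Y : Type*} [NormedAddCommGroup Y]
    [InnerProductSpace ℝ Y] [CompleteSpace Y] {K : X →L[ℝ] Y} (hK : IsCompactOperator K)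
    {w : ℕ → X} {w₀ : X} (hw : ∀ φ, Tendsto (fun n => ⟪w n, φ⟫) atTop (𝓝 ⟪w₀, φ⟫)) :
    Tendsto (fun n => K (w n)) atTop (𝓝 (K w₀)) := by
  obtain ⟨C, hC⟩ := exists_norm_le_of_tendsto_inner hw
  obtain ⟨S, hS, hKS⟩ :=
    IsCompactOperator.image_closedBall_subset_compact (f := (K : X →ₗ[ℝ] Y)) hK C
  refine hS.tendsto_nhds_of_unique_mapClusterPt
    (.of_forall fun n => hKS ⟨w n, by simpa using hC n, rfl⟩) fun z _ hz => ?_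
  refine ext_inner_right ℝ fun φ => ?_
  have hcluster : MapClusterPt ⟪z, φ⟫ atTop fun n => ⟪K (w n), φ⟫ :=
    hz.continuousAt_comp (f := fun y => ⟪y, φ⟫) (by fun_prop)
  have hlim : Tendsto (fun n => ⟪K (w n), φ⟫) atTop (𝓝 ⟪K w₀, φ⟫) := by
    simpa only [K.adjoint_inner_right] using hw (K.adjoint φ)
  by_contra hne
  exact hcluster.neBot.ne ((disjoint_nhds_nhds.2 hne).mono_right hlim).eq_bot

theorem tendsto_inner_compact_apply_self {I : Type*} {l : Filter I} [l.IsCountablyGenerated]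
    {K : X →L[ℝ] X} (hK : IsCompactOperator K) {w : I → X}
    (hw : ∀ φ, Tendsto (fun i => ⟪w i, φ⟫) l (𝓝 0)) :
    Tendsto (fun i => ⟪K (w i), w i⟫) l (𝓝 0) := by
  refine tendsto_of_seq_tendsto fun e he => ?_
  have hwe : ∀ φ, Tendsto (fun n => ⟪w (e n), φ⟫) atTop (𝓝 ⟪(0 : X), φ⟫) := fun φ => by
    simpa only [inner_zero_left, Function.comp_def] using (hw φ).comp he
  obtain ⟨C, hC⟩ := exists_norm_le_of_tendsto_inner hwe
  have hKw := (tendsto_compact_apply_of_tendsto_inner hK hwe).norm.mul_const C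
  rw [map_zero, norm_zero, zero_mul] at hKw
  refine squeeze_zero_norm (fun n => (norm_inner_le_norm _ _).trans ?_) hKw
  gcongr
  exact hC n

end WeakConvergence

section LoewnerOrder

variable {X : Type*} [NormedAddCommGroup X] [InnerProductSpace ℝ X] {S R : X →L[ℝ] X}

theorem norm_apply_sq_le_of_nonneg_of_le (hS : 0 ≤ S) (hSR : S ≤ R) (x : X) :
    ‖S x‖ ^ 2 ≤ ‖R‖ * ⟪R x, x⟫ := by
  have hS' : S.IsPositive := S.nonneg_iff_isPositive.1 hS
  have hform : ∀ y, ⟪S y, y⟫ ≤ ⟪R y, y⟫ := fun y => by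
    simpa only [sub_apply, inner_sub_left, sub_nonneg] using
      ContinuousLinearMap.IsPositive.inner_nonneg_left ((S.le_def R).1 hSR) y
  have hcauchy : ‖S x‖ ^ 2 * ‖S x‖ ^ 2 ≤ ⟪S x, x⟫ * ⟪S (S x), S x⟫ := by
    have := LinearMap.BilinForm.apply_mul_apply_le_of_forall_zero_le
      ((innerₗ X).comp (S : X →ₗ[ℝ] X)) hS'.inner_nonneg_left x (S x)
    simpa [hS'.inner_left_eq_inner_right (S x) x] using this
  have hSS : ⟪S (S x), S x⟫ ≤ ‖R‖ * ‖S x‖ ^ 2 := calc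
    ⟪S (S x), S x⟫ ≤ ⟪R (S x), S x⟫ := hform _
    _ ≤ ‖R (S x)‖ * ‖S x‖ := real_inner_le_norm _ _
    _ ≤ ‖R‖ * ‖S x‖ * ‖S x‖ := by gcongr; exact R.le_opNorm _
    _ = ‖R‖ * ‖S x‖ ^ 2 := by ring
  rcases (sq_nonneg ‖S x‖).eq_or_lt with hzero | hne
  · rw [← hzero]
    exact mul_nonneg (norm_nonneg R) ((hS'.inner_nonneg_left x).trans (hform x))
  · refine le_of_mul_le_mul_right ?_ hne
    calc ‖S x‖ ^ 2 * ‖S x‖ ^ 2 ≤ ⟪S x, x⟫ * (‖R‖ * ‖S x‖ ^ 2) :=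
          hcauchy.trans (mul_le_mul_of_nonneg_left hSS (hS'.inner_nonneg_left x))
      _ ≤ ⟪R x, x⟫ * (‖R‖ * ‖S x‖ ^ 2) := by gcongr; exact hform x
      _ = ‖R‖ * ⟪R x, x⟫ * ‖S x‖ ^ 2 := by ring

theorem opNorm_le_of_nonneg_of_le (hS : 0 ≤ S) (hSR : S ≤ R) : ‖S‖ ≤ ‖R‖ := by
  refine S.opNorm_le_bound (norm_nonneg R) fun x => ?_
  refine le_of_sq_le_sq ?_ (by positivity)
  calc ‖S x‖ ^ 2 ≤ ‖R‖ * ⟪R x, x⟫ := norm_apply_sq_le_of_nonneg_of_le hS hSR x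
    _ ≤ ‖R‖ * (‖R‖ * ‖x‖ * ‖x‖) := by
      gcongr
      exact (real_inner_le_norm _ _).trans (by gcongr; exact R.le_opNorm x)
    _ = (‖R‖ * ‖x‖) ^ 2 := by ring

theorem tendsto_apply_zero_of_le_compact [CompleteSpace X] {I : Type*} {l : Filter I}
    [l.IsCountablyGenerated] {S : I → X →L[ℝ] X} (hR : IsCompactOperator R)
    (hS : ∀ᶠ i in l, 0 ≤ S i ∧ S i ≤ R) {w : I → X}
    (hw : ∀ φ, Tendsto (fun i => ⟪w i, φ⟫) l (𝓝 0)) :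
    Tendsto (fun i => S i (w i)) l (𝓝 0) := by
  have hsq : Tendsto (fun i => ‖S i (w i)‖ ^ 2) l (𝓝 0) := by
    refine squeeze_zero' (.of_forall fun i => sq_nonneg _)
      (hS.mono fun i hi => norm_apply_sq_le_of_nonneg_of_le hi.1 hi.2 (w i)) ?_
    simpa using (tendsto_inner_compact_apply_self hR hw).const_mul ‖R‖
  simpa [tendsto_zero_iff_norm_tendsto_zero] using hsq.sqrt

end LoewnerOrder

section InverseOperator

variable {X D : Type*} [NormedAddCommGroup X] [InnerProductSpace ℝ X]
  [AddCommGroup D] [Module ℝ D] [TopologicalSpace D] {J : D →L[ℝ] X} {R R₀ : X →L[ℝ] D}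

theorem comp_rightInverse_nonneg {A : D → X} (hR : Function.RightInverse R A)
    (hsymm : ∀ u v, ⟪A u, J v⟫ = ⟪J u, A v⟫) (hpos : ∀ u, 0 ≤ ⟪A u, J u⟫) : 0 ≤ J ∘L R := by
  rw [ContinuousLinearMap.nonneg_iff_isPositive, ContinuousLinearMap.isPositive_iff]
  refine ⟨fun x y => ?_, fun x => ?_⟩
  · simpa [hR x, hR y] using (hsymm (R x) (R y)).symm
  · simpa [hR x, real_inner_comm x] using hpos (R x)

-- The form of `A₀` at `m • R x - R₀ x` is nonnegative; expanding it reverses the inequality.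
theorem smul_comp_rightInverse_le {A : D → X} {A₀ : D →ₗ[ℝ] X} {m : ℝ} (hm : 0 ≤ m)
    (hR : Function.RightInverse R A) (hR₀ : Function.RightInverse R₀ A₀)
    (hsymm : ∀ u v, ⟪A u, J v⟫ = ⟪J u, A v⟫) (hsymm₀ : ∀ u v, ⟪A₀ u, J v⟫ = ⟪J u, A₀ v⟫)
    (hpos₀ : ∀ u, 0 ≤ ⟪A₀ u, J u⟫) (hle : ∀ u, m * ⟪A₀ u, J u⟫ ≤ ⟪A u, J u⟫) :
    m • (J ∘L R) ≤ J ∘L R₀ := by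
  rw [ContinuousLinearMap.le_def, ContinuousLinearMap.isPositive_iff]
  refine ⟨fun x y => ?_, fun x => ?_⟩
  · have h₀ := hsymm₀ (R₀ x) (R₀ y)
    have h := hsymm (R x) (R y)
    rw [hR₀ x, hR₀ y] at h₀
    rw [hR x, hR y] at h
    simp [inner_sub_left, inner_sub_right, inner_smul_left, inner_smul_right, h, h₀]
  · have hform := hpos₀ (m • R x - R₀ x)
    have hcross : ⟪A₀ (R x), J (R₀ x)⟫ = ⟪J (R x), x⟫ := by rw [hsymm₀, hR₀ x]
    have hleR := mul_le_mul_of_nonneg_left (hle (R x)) hm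
    rw [hR x, real_inner_comm (J (R x)) x] at hleR
    simp only [map_sub, map_smul, hR₀ x, inner_sub_left, inner_sub_right, real_inner_smul_left,
      real_inner_smul_right, hcross, real_inner_comm (J (R x)) x,
      real_inner_comm (J (R₀ x)) x] at hform
    simp only [sub_apply, smul_apply, ContinuousLinearMap.comp_apply, inner_sub_left,
      real_inner_smul_left]
    linarith

end InverseOperator

/-- `T` restricts to a strongly continuous contraction semigroup on `[0, ∞)`, and its generator
extends the operator `-A`, whose domain is parametrized by `J : D → X`. An operator with an
everywhere defined inverse `K` is encoded by `J = K` and `A = id`. -/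
structure GeneratesContractionSemigroup {X D : Type*} [NormedAddCommGroup X] [NormedSpace ℝ X]
    (J A : D → X) (T : ℝ → X →L[ℝ] X) : Prop where
  map_zero : T 0 = 1
  map_add : ∀ s t, 0 ≤ s → 0 ≤ t → T (s + t) = T s ∘L T t
  opNorm_le_one : ∀ t, 0 ≤ t → ‖T t‖ ≤ 1
  continuousOn : ∀ x, ContinuousOn (fun t => T t x) (Ici 0)
  hasDerivWithinAt : ∀ u t, 0 ≤ t → HasDerivWithinAt (fun s => T s (J u)) (-T t (A u)) (Ici 0) t

namespace GeneratesContractionSemigroup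

section NormedSpace

variable {X : Type*} [NormedAddCommGroup X] [NormedSpace ℝ X] {K : X →L[ℝ] X}
  {T : ℝ → X →L[ℝ] X}

theorem comp_rightInverse {D : Type*} {J A : D → X}
    (h : GeneratesContractionSemigroup J A T) {R : X → D} (hR : Function.RightInverse R A) :
    GeneratesContractionSemigroup (J ∘ R) id T where
  map_zero := h.map_zero
  map_add := h.map_add
  opNorm_le_one := h.opNorm_le_one
  continuousOn := h.continuousOn
  hasDerivWithinAt x t ht := by
    simpa only [hR x, Function.comp_apply, id_eq] using h.hasDerivWithinAt (R x) t ht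

theorem norm_apply_le {D : Type*} {J A : D → X} (h : GeneratesContractionSemigroup J A T) {t : ℝ}
    (ht : 0 ≤ t) (x : X) : ‖T t x‖ ≤ ‖x‖ := by
  simpa only [one_mul] using (T t).le_of_opNorm_le (h.opNorm_le_one t ht) x

-- Along a fixed vector `q` the orbit of `K q` is `K q - t • q`, which is bounded only if `q = 0`.
theorem eq_zero_of_forall_apply_eq (h : GeneratesContractionSemigroup K id T) {q : X}
    (hq : ∀ t, 0 ≤ t → T t q = q) : q = 0 := by
  have horbit : ∀ t, 0 ≤ t → T t (K q) + t • q = K q := by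
    intro t ht
    have hderiv : ∀ r ∈ Icc 0 t,
        HasDerivWithinAt (fun r => T r (K q) + r • q) 0 (Icc 0 t) r := fun r hr => by
      have := ((h.hasDerivWithinAt q r hr.1).mono Icc_subset_Ici_self).add
        ((hasDerivWithinAt_id r (Icc 0 t)).smul_const q)
      simpa [Pi.add_def, hq r hr.1] using this
    have hbound := norm_image_sub_le_of_norm_deriv_le_segment' hderiv
      (fun _ _ => norm_zero.le) t ⟨ht, le_rfl⟩
    simpa [h.map_zero, sub_eq_zero] using hbound
  have hle : ∀ n : ℕ, n • ‖q‖ ≤ 2 * ‖K q‖ := fun n => calc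
    n • ‖q‖ = ‖K q - T n (K q)‖ := by
      rw [← eq_sub_of_add_eq' (horbit n n.cast_nonneg), norm_smul]
      simp
    _ ≤ ‖K q‖ + ‖T n (K q)‖ := norm_sub_le _ _
    _ ≤ 2 * ‖K q‖ := by linarith [h.norm_apply_le n.cast_nonneg (K q)]
  by_contra hne
  obtain ⟨n, hn⟩ := exists_lt_nsmul (norm_pos_iff.2 hne) (2 * ‖K q‖)
  exact (hle n).not_gt hn

theorem apply_comm (h : GeneratesContractionSemigroup K id T) {s : ℝ} (hs : 0 ≤ s) (x : X) :
    T s (K x) = K (T s x) := by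
  suffices hfixed : ∀ t, 0 ≤ t → T t (T s (K x) - K (T s x)) = T s (K x) - K (T s x) from
    sub_eq_zero.1 (h.eq_zero_of_forall_apply_eq hfixed)
  intro t ht
  have hderiv : ∀ r ∈ Icc 0 t,
      HasDerivWithinAt (fun r => T (r + s) (K x) - T r (K (T s x))) 0 (Icc 0 t) r := by
    intro r hr
    have hshift := (h.hasDerivWithinAt x (r + s) (add_nonneg hr.1 hs)).scomp r
      ((hasDerivWithinAt_id r (Icc 0 t)).add_const s) fun r hr => add_nonneg hr.1 hs
    have := hshift.sub ((h.hasDerivWithinAt (T s x) r hr.1).mono Icc_subset_Ici_self)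
    simpa [Function.comp_def, Pi.sub_def, h.map_add r s hr.1 hs] using this
  have hconst := norm_image_sub_le_of_norm_deriv_le_segment' hderiv
    (fun _ _ => norm_zero.le) t ⟨ht, le_rfl⟩
  simpa [h.map_zero, h.map_add t s ht hs, sub_eq_zero] using hconst

-- `K (t⁻¹ • (x - T t x)) = t⁻¹ • (K x - T t (K x))` converges to `x` as `t` decreases to `0`.
theorem denseRange (h : GeneratesContractionSemigroup K id T) : DenseRange K := by
  intro x
  have hslope : Tendsto (fun t => -slope (fun s => T s (K x)) 0 t) (𝓝[>] 0) (𝓝 x) := by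
    have := hasDerivWithinAt_iff_tendsto_slope.1 (h.hasDerivWithinAt x 0 le_rfl)
    simpa [h.map_zero, Ici_sdiff_left] using this.neg
  refine mem_closure_of_tendsto hslope (eventually_mem_nhdsWithin.mono fun t ht => ?_)
  refine ⟨t⁻¹ • (x - T t x), ?_⟩
  simp [slope_def_module, h.map_zero, ← h.apply_comm (le_of_lt ht), ← smul_neg]

theorem norm_duhamel_sub_le {T' : ℝ → X →L[ℝ] X} {K' : X →L[ℝ] X}
    (h : GeneratesContractionSemigroup K id T) (h' : GeneratesContractionSemigroup K' id T')
    (y : X) {t C : ℝ} (ht : 0 ≤ t)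
    (hC : ∀ s ∈ Icc 0 t, ‖K (T s y) - K' (T s y)‖ ≤ C) :
    ‖K' (T t (K y)) - T' t (K' (K y))‖ ≤ C * t := by
  have hmaps : MapsTo (fun r => t - r) (Icc 0 t) (Ici 0) := fun r hr => sub_nonneg.2 hr.2
  have hbounded : ∀ s, ∀ᶠ r in 𝓝[Icc 0 t] s, ‖T' (t - r) ∘L K'‖ ≤ 1 * ‖K'‖ := fun s =>
    eventually_mem_nhdsWithin.mono fun r hr => (ContinuousLinearMap.opNorm_comp_le _ _).trans
      (by gcongr; exact h'.opNorm_le_one _ (hmaps hr))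
  have hcont : ∀ s ∈ Icc 0 t, ∀ x,
      ContinuousWithinAt (fun r => (T' (t - r) ∘L K') x) (Icc 0 t) s := fun s hs x =>
    ((h'.continuousOn (K' x)).comp (by fun_prop) hmaps) s hs
  have hderiv : ∀ s ∈ Icc 0 t, HasDerivWithinAt (fun r => T' (t - r) (K' (T r (K y))))
      (T' (t - s) (K (T s y) - K' (T s y))) (Icc 0 t) s := by
    intro s hs
    have hbackward := (h'.hasDerivWithinAt (T s (K y)) (t - s) (hmaps hs)).scomp s
      ((hasDerivWithinAt_id s (Icc 0 t)).const_sub t) hmaps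
    have := hasDerivWithinAt_clm_apply_of_strong (hbounded s) (hcont s hs) hbackward
      ((h.hasDerivWithinAt y s hs.1).mono Icc_subset_Ici_self)
    simpa [h.apply_comm hs.1, sub_eq_add_neg] using this
  have hbound := norm_image_sub_le_of_norm_deriv_le_segment' hderiv
    (fun s hs => (h'.norm_apply_le (hmaps ⟨hs.1, hs.2.le⟩) _).trans (hC s ⟨hs.1, hs.2.le⟩))
    t ⟨ht, le_rfl⟩
  simpa [h.map_zero, h'.map_zero] using hbound

section Convergence

variable {I : Type*} {l : Filter I} {K : I → X →L[ℝ] X} {K₀ : X →L[ℝ] X}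
  {T : I → ℝ → X →L[ℝ] X} {T₀ : ℝ → X →L[ℝ] X} {B : ℝ} {τ : I → ℝ} {τ₀ : ℝ}

theorem tendsto_duhamel_sub_of_tendsto_inverse (h₀ : GeneratesContractionSemigroup K₀ id T₀)
    (h : ∀ᶠ i in l, GeneratesContractionSemigroup (K i) id (T i)) (hB : ∀ᶠ i in l, ‖K i‖ ≤ B)
    (hK : ∀ x, Tendsto (fun i => K i x) l (𝓝 (K₀ x))) (hτ₀ : 0 ≤ τ₀)
    (hτ : Tendsto τ l (𝓝[Ici 0] τ₀)) (y : X) :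
    Tendsto (fun i => K i (T₀ (τ i) (K₀ y)) - T i (τ i) (K i (K₀ y))) l (𝓝 0) := by
  have horbit : IsCompact ((fun s => T₀ s y) '' Icc 0 (τ₀ + 1)) :=
    isCompact_Icc.image_of_continuousOn ((h₀.continuousOn y).mono Icc_subset_Ici_self)
  have hunif := Metric.tendstoUniformlyOn_iff.1 (tendstoUniformlyOn_clm_of_isCompact hB hK horbit)
  have hτ' := tendsto_nhdsWithin_iff.1 hτ
  rw [Metric.tendsto_nhds]
  intro ε hε
  set δ := ε / (τ₀ + 2)
  have hδpos : 0 < δ := by positivity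
  filter_upwards [h, hunif δ hδpos, hτ'.2, hτ'.1.eventually_le_const (lt_add_one τ₀)]
    with i hi hclose hnonneg hle
  have hKδ : ∀ s ∈ Icc 0 (τ i), ‖K₀ (T₀ s y) - K i (T₀ s y)‖ ≤ δ := fun s hs => by
    rw [← dist_eq_norm]
    exact (hclose _ ⟨s, ⟨hs.1, hs.2.trans hle⟩, rfl⟩).le
  rw [dist_zero_right]
  calc ‖K i (T₀ (τ i) (K₀ y)) - T i (τ i) (K i (K₀ y))‖
      ≤ δ * τ i := h₀.norm_duhamel_sub_le hi y hnonneg hKδ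
    _ ≤ δ * (τ₀ + 1) := by gcongr
    _ < δ * (τ₀ + 2) := by gcongr; norm_num
    _ = ε := div_mul_cancel₀ ε (by positivity)

theorem tendsto_apply_of_tendsto_inverse (h₀ : GeneratesContractionSemigroup K₀ id T₀)
    (h : ∀ᶠ i in l, GeneratesContractionSemigroup (K i) id (T i)) (hB : ∀ᶠ i in l, ‖K i‖ ≤ B)
    (hK : ∀ x, Tendsto (fun i => K i x) l (𝓝 (K₀ x))) (hτ₀ : 0 ≤ τ₀)
    (hτ : Tendsto τ l (𝓝[Ici 0] τ₀)) (x : X) :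
    Tendsto (fun i => T i (τ i) x) l (𝓝 (T₀ τ₀ x)) := by
  have hτ' := tendsto_nhdsWithin_iff.1 hτ
  have hT : ∀ᶠ i in l, ‖T i (τ i)‖ ≤ 1 := by
    filter_upwards [h, hτ'.2] with i hi hnonneg using hi.opNorm_le_one _ hnonneg
  refine tendsto_clm_apply_of_denseRange (h₀.denseRange.comp h₀.denseRange K₀.continuous) hT
    (fun y => ?_) x
  have hinitial : Tendsto (fun i => T i (τ i) (K₀ (K₀ y) - K i (K₀ y))) l (𝓝 0) :=
    tendsto_clm_apply_zero hT (by simpa using (hK (K₀ y)).const_sub (K₀ (K₀ y)))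
  have hduhamel := h₀.tendsto_duhamel_sub_of_tendsto_inverse h hB hK hτ₀ hτ y
  have hlimit : Tendsto (fun i => K i (T₀ (τ i) (K₀ y))) l (𝓝 (T₀ τ₀ (K₀ (K₀ y)))) := by
    rw [h₀.apply_comm hτ₀]
    exact tendsto_clm_apply hB (hK _) ((h₀.continuousOn (K₀ y) τ₀ hτ₀).tendsto.comp hτ)
  simpa using (hinitial.sub hduhamel).add hlimit

end Convergence

end NormedSpace

section InnerProductSpace

variable {X : Type*} [NormedAddCommGroup X] [InnerProductSpace ℝ X]

theorem antitoneOn_energy {K : X →L[ℝ] X} {T : ℝ → X →L[ℝ] X}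
    (h : GeneratesContractionSemigroup K id T) (hK : K.IsPositive) (z : X) :
    AntitoneOn (fun s => ‖T s (K (K z))‖ ^ 2 + 2 * (s * ⟪T s (K z), T s (K (K z))⟫) +
      2 * (s ^ 2 * ‖T s (K z)‖ ^ 2)) (Ici 0) := by
  set E := fun s => ‖T s (K (K z))‖ ^ 2 + 2 * (s * ⟪T s (K z), T s (K (K z))⟫) +
    2 * (s ^ 2 * ‖T s (K z)‖ ^ 2)
  have hderiv : ∀ s ∈ Ici 0, HasDerivWithinAt E (-(4 * s ^ 2 * ⟪K (T s z), T s z⟫)) (Ici 0) s := by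
    intro s hs
    have hu := h.hasDerivWithinAt z s hs
    have hKu := h.hasDerivWithinAt (K z) s hs
    have hid := hasDerivWithinAt_id s (Ici 0)
    refine ((hKu.norm_sq.add ((hid.mul (hu.inner ℝ hKu)).const_mul 2)).add
      (((hid.pow 2).mul hu.norm_sq).const_mul 2)).congr_deriv ?_
    have hsymm : ⟪T s z, K (K (T s z))⟫ = ‖K (T s z)‖ ^ 2 := by
      rw [← hK.inner_left_eq_inner_right, real_inner_self_eq_norm_sq]
    simp only [h.apply_comm hs, id_eq, inner_neg_left, inner_neg_right, hsymm,
      real_inner_self_eq_norm_sq, real_inner_comm (K (T s z)) (K (K (T s z)))]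
    simp
    ring
  refine antitoneOn_of_hasDerivWithinAt_nonpos (convex_Ici 0)
    (fun s hs => (hderiv s hs).continuousWithinAt)
    (fun s hs => (hderiv s (interior_subset hs)).mono interior_subset) fun s _ => ?_
  exact neg_nonpos.2 (mul_nonneg (by positivity) (hK.inner_nonneg_left _))

theorem mul_norm_apply_le {K : X →L[ℝ] X} {T : ℝ → X →L[ℝ] X}
    (h : GeneratesContractionSemigroup K id T) (hK : K.IsPositive) {t : ℝ} (ht : 0 ≤ t) (w : X) :
    t * ‖T t w‖ ≤ ‖K w‖ := by
  refine h.denseRange.induction_on (p := fun w => t * ‖T t w‖ ≤ ‖K w‖) w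
    (isClosed_le (by fun_prop) (by fun_prop)) fun z => ?_
  have henergy := h.antitoneOn_energy hK z self_mem_Ici ht ht
  have hcross : 0 ≤ t * ⟪T t (K z), T t (K (K z))⟫ := by
    rw [h.apply_comm ht (K z)]
    exact mul_nonneg ht (hK.inner_nonneg_right _)
  refine le_of_sq_le_sq ?_ (norm_nonneg _)
  simp only [h.map_zero, one_apply_eq_self] at henergy
  nlinarith [sq_nonneg ‖T t (K (K z))‖, sq_nonneg (t * ‖T t (K z)‖)]

theorem tendsto_apply_of_tendsto_inner [CompleteSpace X] {I : Type*} {l : Filter I}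
    [l.IsCountablyGenerated] {K : I → X →L[ℝ] X} {K₀ : X →L[ℝ] X} {T : I → ℝ → X →L[ℝ] X}
    {T₀ : ℝ → X →L[ℝ] X} {c : ℝ} (hc : 0 < c)
    (h₀ : GeneratesContractionSemigroup K₀ id T₀) (hK₀ : IsCompactOperator K₀)
    (h : ∀ᶠ i in l, GeneratesContractionSemigroup (K i) id (T i))
    (hKnonneg : ∀ᶠ i in l, 0 ≤ K i) (hKle : ∀ᶠ i in l, c • K i ≤ K₀)
    (hK : ∀ x, Tendsto (fun i => K i x) l (𝓝 (K₀ x)))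
    {ψ : I → X} {ψ₀ : X} (hψ : ∀ φ, Tendsto (fun i => ⟪ψ i, φ⟫) l (𝓝 ⟪ψ₀, φ⟫))
    {τ : I → ℝ} {τ₀ : ℝ} (hτ₀ : 0 < τ₀) (hτ : Tendsto τ l (𝓝 τ₀)) :
    Tendsto (fun i => T i (τ i) (ψ i)) l (𝓝 (T₀ τ₀ ψ₀)) := by
  have hcK : ∀ᶠ i in l, 0 ≤ c • K i ∧ c • K i ≤ K₀ := by
    filter_upwards [hKnonneg, hKle] with i hnonneg hle
    exact ⟨(c • K i).nonneg_iff_isPositive.2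
      (((K i).nonneg_iff_isPositive.1 hnonneg).smul_of_nonneg hc.le), hle⟩
  have hτpos : ∀ᶠ i in l, 0 < τ i := hτ.eventually_const_lt hτ₀
  have hfixed : Tendsto (fun i => T i (τ i) ψ₀) l (𝓝 (T₀ τ₀ ψ₀)) := by
    have hB : ∀ᶠ i in l, ‖K i‖ ≤ ‖K₀‖ / c := hcK.mono fun i hi => by
      rw [le_div_iff₀' hc]
      simpa [norm_smul, abs_of_pos hc] using opNorm_le_of_nonneg_of_le hi.1 hi.2
    exact h₀.tendsto_apply_of_tendsto_inverse h hB hK hτ₀.le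
      (tendsto_nhdsWithin_iff.2 ⟨hτ, hτpos.mono fun _ => le_of_lt⟩) ψ₀
  have hweak : Tendsto (fun i => T i (τ i) (ψ i - ψ₀)) l (𝓝 0) := by
    have hcKweak : Tendsto (fun i => (c • K i) (ψ i - ψ₀)) l (𝓝 0) :=
      tendsto_apply_zero_of_le_compact hK₀ hcK fun φ => by
        simpa [inner_sub_left] using (hψ φ).sub_const ⟪ψ₀, φ⟫
    have hKweak : Tendsto (fun i => K i (ψ i - ψ₀)) l (𝓝 0) := by
      simpa [smul_smul, hc.ne'] using hcKweak.const_smul c⁻¹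
    have hquot : Tendsto (fun i => ‖K i (ψ i - ψ₀)‖ / τ i) l (𝓝 0) := by
      simpa [Pi.div_def] using hKweak.norm.div hτ hτ₀.ne'
    refine squeeze_zero_norm' ?_ hquot
    filter_upwards [h, hKnonneg, hτpos] with i hi hnonneg hpos
    rw [le_div_iff₀' hpos]
    exact hi.mul_norm_apply_le ((K i).nonneg_iff_isPositive.1 hnonneg) hpos.le _
  simpa using hweak.add hfixed

end InnerProductSpace

end GeneratesContractionSemigroup

theorem stmt3_general {X D I : Type*} [NormedAddCommGroup X] [InnerProductSpace ℝ X]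
    [CompleteSpace X] [AddCommGroup D] [Module ℝ D] [TopologicalSpace D] {l : Filter I}
    [l.IsCountablyGenerated] {J : D →L[ℝ] X} (hJ : IsCompactOperator J)
    {A : I → D → X} {A₀ : D →ₗ[ℝ] X} (hsymm : ∀ᶠ i in l, ∀ u v, ⟪A i u, J v⟫ = ⟪J u, A i v⟫)
    (hsymm₀ : ∀ u v, ⟪A₀ u, J v⟫ = ⟪J u, A₀ v⟫) (hpos₀ : ∀ u, 0 ≤ ⟪A₀ u, J u⟫)
    {m : ℝ} (hm : 0 < m) (hle : ∀ᶠ i in l, ∀ u, m * ⟪A₀ u, J u⟫ ≤ ⟪A i u, J u⟫)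
    {R : I → X →L[ℝ] D} {R₀ : X →L[ℝ] D}
    (hR : ∀ᶠ i in l, Function.RightInverse (R i) (A i)) (hR₀ : Function.RightInverse R₀ A₀)
    (hRlim : ∀ x, Tendsto (fun i => J (R i x)) l (𝓝 (J (R₀ x))))
    {T : I → ℝ → X →L[ℝ] X} {T₀ : ℝ → X →L[ℝ] X}
    (hT : ∀ᶠ i in l, GeneratesContractionSemigroup J (A i) (T i))
    (hT₀ : GeneratesContractionSemigroup J A₀ T₀)
    {ψ : I → X} {ψ₀ : X} (hψ : ∀ φ, Tendsto (fun i => ⟪ψ i, φ⟫) l (𝓝 ⟪ψ₀, φ⟫))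
    {τ : I → ℝ} {τ₀ : ℝ} (hτ₀ : 0 < τ₀) (hτ : Tendsto τ l (𝓝 τ₀)) :
    Tendsto (fun i => T i (τ i) (ψ i)) l (𝓝 (T₀ τ₀ ψ₀)) := by
  refine GeneratesContractionSemigroup.tendsto_apply_of_tendsto_inner (K := fun i => J ∘L R i)
    (K₀ := J ∘L R₀) hm (hT₀.comp_rightInverse hR₀) (hJ.comp_clm R₀) ?_ ?_ ?_ hRlim hψ hτ₀ hτ
  · filter_upwards [hT, hR] with i hTi hRi using hTi.comp_rightInverse hRi
  · filter_upwards [hR, hsymm, hle] with i hRi hsymm_i hle_i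
    exact comp_rightInverse_nonneg hRi hsymm_i
      fun u => (mul_nonneg hm.le (hpos₀ u)).trans (hle_i u)
  · filter_upwards [hR, hsymm, hle] with i hRi hsymm_i hle_i
    exact smul_comp_rightInverse_le hm.le hRi hR₀ hsymm_i hsymm₀ hpos₀ hle_i

/-- Under assumptions (C1)-(C3) on the family `(A_ε)`, if `ψ_ε → ψ_0` weakly
in `X` and `τ_ε → τ_0 > 0`, then `T^ε_{τ_ε} ψ_ε → T^0_{τ_0} ψ_0` strongly in `X`. -/
theorem stmt3 {X X₁ U : Type*}
    [NormedAddCommGroup X] [InnerProductSpace ℝ X] [CompleteSpace X]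
    [NormedAddCommGroup X₁] [NormedSpace ℝ X₁]
    -- (C1): common domain `X₁` compactly embedded in `X`, each `A_ε` self-adjoint
    (ι : X₁ →L[ℝ] X) (hι_inj : Function.Injective ι) (hι_cpt : IsCompactOperator ι)
    (A : ℝ → X₁ →L[ℝ] X)
    (hsa : ∀ ε : ℝ, 0 ≤ ε → ∀ ψ φ : X₁, ⟪A ε ψ, ι φ⟫ = ⟪ι ψ, A ε φ⟫)
    -- (C2): `A₀` strictly positive and `m₀⟨A₀ψ,ψ⟩ ≤ ⟨A_εψ,ψ⟩ ≤ m₁⟨A₀ψ,ψ⟩`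
    (m₀ m₁ : ℝ) (hm₀ : 0 < m₀) (hm₁ : 0 < m₁)
    (hpos : ∀ ψ : X₁, ψ ≠ 0 → 0 < ⟪A 0 ψ, ι ψ⟫)
    (hcomp : ∀ ε : ℝ, 0 ≤ ε → ∀ ψ : X₁,
      m₀ * ⟪A 0 ψ, ι ψ⟫ ≤ ⟪A ε ψ, ι ψ⟫ ∧ ⟪A ε ψ, ι ψ⟫ ≤ m₁ * ⟪A 0 ψ, ι ψ⟫)
    -- (C3): strong convergence of the resolvents `A_ε⁻¹ψ → A₀⁻¹ψ`
    (Ainv : ℝ → X →L[ℝ] X₁)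
    (hAinv : ∀ ε : ℝ, 0 ≤ ε → (∀ x : X, A ε (Ainv ε x) = x) ∧ ∀ ψ : X₁, Ainv ε (A ε ψ) = ψ)
    (hres : ∀ x : X, Tendsto (fun ε => ι (Ainv ε x)) (nhdsWithin 0 (Set.Ioi 0))
      (nhds (ι (Ainv 0 x))))
    -- `T^ε` is the contraction semigroup generated by `-A_ε`
    (T : ℝ → ℝ → X →L[ℝ] X)
    (hT0 : ∀ ε : ℝ, 0 ≤ ε → T ε 0 = 1)
    (hTadd : ∀ ε : ℝ, 0 ≤ ε → ∀ s t : ℝ, 0 ≤ s → 0 ≤ t → T ε (s + t) = (T ε s).comp (T ε t))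
    (hTcont : ∀ ε : ℝ, 0 ≤ ε → ∀ x : X, Continuous fun t => T ε t x)
    (hTcontr : ∀ ε : ℝ, 0 ≤ ε → ∀ t : ℝ, 0 ≤ t → ‖T ε t‖ ≤ 1)
    (hgen : ∀ ε : ℝ, 0 ≤ ε → ∀ ψ : X₁, ∀ t : ℝ, 0 ≤ t →
      HasDerivAt (fun s => T ε s (ι ψ)) (-(T ε t (A ε ψ))) t)
    -- `ψ_ε → ψ_0` weakly in `X`
    (ψ : ℝ → X)
    (hψ : ∀ φ : X, Tendsto (fun ε => ⟪ψ ε, φ⟫) (nhdsWithin 0 (Set.Ioi 0)) (nhds ⟪ψ 0, φ⟫))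
    -- `τ_ε → τ_0 > 0`
    (τf : ℝ → ℝ) (hτpos : ∀ ε : ℝ, 0 ≤ ε → 0 < τf ε)
    (hτ : Tendsto τf (nhdsWithin 0 (Set.Ioi 0)) (nhds (τf 0))) :
    Tendsto (fun ε => T ε (τf ε) (ψ ε)) (nhdsWithin 0 (Set.Ioi 0))
      (nhds (T 0 (τf 0) (ψ 0))) := by
  have hev : ∀ᶠ ε : ℝ in 𝓝[>] 0, 0 ≤ ε := eventually_nhdsWithin_of_forall fun _ hε => le_of_lt hε
  have hsg ε hε : GeneratesContractionSemigroup ι (A ε) (T ε) :=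
    ⟨hT0 ε hε, hTadd ε hε, hTcontr ε hε, fun x => (hTcont ε hε x).continuousOn,
      fun u t ht => (hgen ε hε u t ht).hasDerivWithinAt⟩
  have hnonneg u : 0 ≤ ⟪A 0 u, ι u⟫ := by
    rcases eq_or_ne u 0 with rfl | hu
    exacts [by simp, (hpos u hu).le]
  exact stmt3_general (A₀ := (A 0 : X₁ →ₗ[ℝ] X)) hι_cpt (hev.mono hsa) (hsa 0 le_rfl) hnonneg hm₀
    (hev.mono fun ε hε u => (hcomp ε hε u).1) (hev.mono fun ε hε => (hAinv ε hε).1)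
    (hAinv 0 le_rfl).1 hres (hev.mono hsg) (hsg 0 le_rfl) hψ (hτpos 0 le_rfl) hτ
end

section
/- (Bang-bang property.) Assume the unique continuation property: if B*T*_t η = 0 for all t in a set of positive measure, then η = 0. Then any time optimal control u* for (TP)^M satisfies ||u*(t)||_U = M for almost every t ∈ (0, τ*(M)), and the optimal control is unique. -/
open MeasureTheory Filter

/-- The state trajectory `z(t;ψ,u) = T_t ψ + ∫_0^t T_{t-σ} B u(σ) dσ`. -/
noncomputable def traj {X U : Type*} [NormedAddCommGroup X] [NormedSpace ℝ X] [CompleteSpace X]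
    [NormedAddCommGroup U] [NormedSpace ℝ U]
    (T : ℝ → X →L[ℝ] X) (B : U →L[ℝ] X) (ψ : X) (u : ℝ → U) (t : ℝ) : X :=
  T t ψ + ∫ σ in Set.Ioc 0 t, T (t - σ) (B (u σ))

/-- `u` belongs to the closed ball of radius `M` in `L^∞((0,∞);U)`. -/
def admissible {U : Type*} [NormedAddCommGroup U] (M : ℝ) (u : ℝ → U) : Prop :=
  AEStronglyMeasurable u (volume.restrict (Set.Ioi 0)) ∧
    ∀ᵐ t ∂volume.restrict (Set.Ioi 0), ‖u t‖ ≤ M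

/-!
At the optimal time `τ` no reachable state lies in the interior of the target, for otherwise the
target would be hit slightly earlier. Hahn-Banach therefore yields a nonzero functional `η`
separating the convex reachable set from the target, and every optimal control `u` minimizes
`η` over the reachable set. Where `‖u σ‖ < M` there is room to perturb `u` in both directions `±w`,
so `η ∘ T (τ - σ) ∘ B` vanishes for almost every such `σ`. By unique continuation the set of these
`σ` is null. The midpoint of two optimal controls is again optimal, hence of norm `M` almost
everywhere, and strict convexity forces the two controls to agree.
-/

section BangBang

open Set Topology

theorem ae_forall_mem_of_isClosed {α ι : Type*} [TopologicalSpace α] [HereditarilyLindelofSpace α]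
    [MeasurableSpace α] {μ : Measure α} {C : ι → Set α} (hC : ∀ i, IsClosed (C i))
    (h : ∀ i, ∀ᵐ a ∂μ, a ∈ C i) : ∀ᵐ a ∂μ, ∀ i, a ∈ C i := by
  filter_upwards [Measure.support_mem_ae (μ := μ)] with a ha i
  exact Measure.support_subset_of_isClosed (hC i) (h i) ha

section StrongContinuity

variable {α X Y : Type*} [TopologicalSpace α] [CompactSpace α]
  [NormedAddCommGroup X] [NormedSpace ℝ X] [CompleteSpace X]
  [NormedAddCommGroup Y] [NormedSpace ℝ Y] {S : α → X →L[ℝ] Y}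

theorem exists_opNorm_le_of_continuous_apply (hS : ∀ x, Continuous fun a => S a x) :
    ∃ C, ∀ a, ‖S a‖ ≤ C :=
  banach_steinhaus fun x =>
    let ⟨C, hC⟩ := isCompact_univ.exists_bound_of_continuousOn (hS x).continuousOn
    ⟨C, fun a => hC a (mem_univ a)⟩

theorem continuous_uncurry_of_continuous_apply (hS : ∀ x, Continuous fun a => S a x) :
    Continuous fun p : α × X => S p.1 p.2 := by
  obtain ⟨C, hC⟩ := exists_opNorm_le_of_continuous_apply hS
  refine continuous_prod_of_continuous_lipschitzWith' _ C.toNNReal (fun a => ?_) hS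
  exact (S a).lipschitz.weaken (NNReal.le_toNNReal_of_coe_le (hC a))

end StrongContinuity

section StronglyContinuousFamily

variable {X : Type*} [NormedAddCommGroup X] [NormedSpace ℝ X] {T : ℝ → X →L[ℝ] X}

/-- Strong continuity on `[0, ∞)`, the half-line on which trajectories evaluate the family. -/
def StronglyContinuousFamily (T : ℝ → X →L[ℝ] X) : Prop :=
  ∀ x, ContinuousOn (fun t => T t x) (Ici 0)

theorem StronglyContinuousFamily.continuous_apply_Icc (hT : StronglyContinuousFamily T)
    (τ : ℝ) (x : X) : Continuous fun t : Icc 0 τ => T t x :=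
  ((hT x).mono Icc_subset_Ici_self).domRestrict

theorem StronglyContinuousFamily.isClosed_setOf_dual_apply_eq_zero (hT : StronglyContinuousFamily T)
    (η : StrongDual ℝ X) (x : X) : IsClosed {t | 0 ≤ t ∧ η (T t x) = 0} :=
  (η.continuous.comp_continuousOn (hT x)).preimage_isClosed_of_isClosed isClosed_Ici
    isClosed_singleton

theorem StronglyContinuousFamily.tendsto_indicator_Ioc_apply_sub
    (hT : StronglyContinuousFamily T) {σ τ : ℝ} (hσ : σ ∈ Ioo 0 τ) (v : ℝ → X) :
    Tendsto (fun t => (Ioc 0 t).indicator (fun σ => T (t - σ) (v σ)) σ) (𝓝[<] τ)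
      (𝓝 (T (τ - σ) (v σ))) := by
  have hcont : ContinuousAt (fun t => T (t - σ) (v σ)) τ :=
    ((hT (v σ)).continuousAt (Ici_mem_nhds (sub_pos.2 hσ.2))).comp (f := fun t => t - σ)
      (by fun_prop)
  refine (hcont.tendsto.mono_left nhdsWithin_le_nhds).congr' ?_
  filter_upwards [nhdsWithin_le_nhds (Ioi_mem_nhds hσ.2)] with t ht
  have hmem : σ ∈ Ioc 0 t := ⟨hσ.1, le_of_lt ht⟩
  rw [indicator_of_mem hmem]

variable [CompleteSpace X]

theorem StronglyContinuousFamily.exists_opNorm_le_of_mem_Icc (hT : StronglyContinuousFamily T)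
    (τ : ℝ) : ∃ C, 0 ≤ C ∧ ∀ t ∈ Icc 0 τ, ‖T t‖ ≤ C := by
  obtain ⟨C, hC⟩ := exists_opNorm_le_of_continuous_apply (hT.continuous_apply_Icc τ)
  exact ⟨max C 0, le_max_right _ _, fun t ht => (hC ⟨t, ht⟩).trans (le_max_left _ _)⟩

theorem StronglyContinuousFamily.aestronglyMeasurable_apply_sub (hT : StronglyContinuousFamily T)
    {v : ℝ → X} {t : ℝ} (hv : AEStronglyMeasurable v (volume.restrict (Ioc 0 t))) :
    AEStronglyMeasurable (fun σ => T (t - σ) (v σ)) (volume.restrict (Ioc 0 t)) := by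
  rcases lt_or_ge t 0 with ht | ht
  · simp [Ioc_eq_empty_of_le ht.le]
  have hproj : Continuous fun σ => projIcc 0 t ht (t - σ) := continuous_projIcc.comp (by fun_prop)
  have hcomp := (continuous_uncurry_of_continuous_apply
    (hT.continuous_apply_Icc t)).comp_aestronglyMeasurable (hproj.aestronglyMeasurable.prodMk hv)
  refine hcomp.congr ?_
  filter_upwards [ae_restrict_mem measurableSet_Ioc] with σ hσ
  have hmem : t - σ ∈ Icc 0 t := ⟨sub_nonneg.2 hσ.2, sub_le_self _ hσ.1.le⟩
  simp only [projIcc_of_mem ht hmem]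

end StronglyContinuousFamily

section UniqueContinuation

variable {X U : Type*} [NormedAddCommGroup X] [NormedSpace ℝ X] [NormedAddCommGroup U]
  [NormedSpace ℝ U] {T : ℝ → X →L[ℝ] X} {B : U →L[ℝ] X}

/-- Unique continuation for the adjoint observation `t ↦ B* T*_t η`, which for `η` in the dual of a
Banach space is the functional `η ∘ T t ∘ B`. Only sets of positive times are tested, since `T` is
meaningful on `[0, ∞)` alone. -/
def UniqueContinuation (T : ℝ → X →L[ℝ] X) (B : U →L[ℝ] X) : Prop :=
  ∀ η : StrongDual ℝ X, ∀ s ⊆ Ioi (0 : ℝ), MeasurableSet s → 0 < volume s →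
    (∀ t ∈ s, (η ∘L T t) ∘L B = 0) → η = 0

theorem StronglyContinuousFamily.measurableSet_setOf_dual_comp_eq_zero
    (hT : StronglyContinuousFamily T) (B : U →L[ℝ] X) (η : StrongDual ℝ X) :
    MeasurableSet {t | 0 < t ∧ (η ∘L T t) ∘L B = 0} := by
  have hinter : {t | 0 < t ∧ (η ∘L T t) ∘L B = 0} =
      Ioi 0 ∩ ⋂ w, {t | 0 ≤ t ∧ η (T t (B w)) = 0} := by
    ext t
    simp +contextual [ContinuousLinearMap.ext_iff, le_of_lt]
  rw [hinter]
  exact measurableSet_Ioi.inter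
    (isClosed_iInter fun w => hT.isClosed_setOf_dual_apply_eq_zero η (B w)).measurableSet

theorem UniqueContinuation.ae_dual_comp_ne_zero (hUC : UniqueContinuation T B)
    (hT : StronglyContinuousFamily T) {η : StrongDual ℝ X} (hη : η ≠ 0) :
    ∀ᵐ t, 0 < t → (η ∘L T t) ∘L B ≠ 0 := by
  have hnull : volume {t | 0 < t ∧ (η ∘L T t) ∘L B = 0} = 0 := by
    by_contra hne
    exact hη (hUC η _ (fun t ht => ht.1) (hT.measurableSet_setOf_dual_comp_eq_zero B η)
      (pos_iff_ne_zero.2 hne) fun t ht => ht.2)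
  simpa [ae_iff] using hnull

end UniqueContinuation

theorem UniqueContinuation.of_adjoint {X U : Type*} [NormedAddCommGroup X] [InnerProductSpace ℝ X]
    [CompleteSpace X] [NormedAddCommGroup U] [InnerProductSpace ℝ U] [CompleteSpace U]
    {T : ℝ → X →L[ℝ] X} {B : U →L[ℝ] X}
    (hUC : ∀ η : X, ∀ s ⊆ Ioi (0 : ℝ), MeasurableSet s → 0 < volume s →
      (∀ t ∈ s, B.adjoint ((T t).adjoint η) = 0) → η = 0) :
    UniqueContinuation T B := by
  intro η s hs0 hs hpos hzero
  obtain ⟨x, rfl⟩ := (InnerProductSpace.toDual ℝ X).surjective η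
  rw [map_eq_zero_iff _ (InnerProductSpace.toDual ℝ X).injective]
  refine hUC x s hs0 hs hpos fun t ht => ext_inner_right ℝ fun w => ?_
  simpa [ContinuousLinearMap.adjoint_inner_left] using congr($(hzero t ht) w)

namespace admissible

variable {U : Type*} [NormedAddCommGroup U] {M : ℝ} {u : ℝ → U}

theorem smul [NormedSpace ℝ U] (hu : admissible M u) (c : ℝ) : admissible (‖c‖ * M) (c • u) := by
  refine ⟨hu.1.const_smul c, ?_⟩
  filter_upwards [hu.2] with σ hσ
  simpa only [Pi.smul_apply, norm_smul] using mul_le_mul_of_nonneg_left hσ (norm_nonneg c)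

theorem indicator_const {E : Set ℝ} (hE : NullMeasurableSet E (volume.restrict (Ioi 0))) (w : U) :
    admissible ‖w‖ (E.indicator fun _ => w) :=
  ⟨aestronglyMeasurable_const.indicator₀ hE, ae_of_all _ (norm_indicator_le_norm_self _)⟩

theorem add_indicator_const (hu : admissible M u) {E : Set ℝ}
    (hE : NullMeasurableSet E (volume.restrict (Ioi 0))) {w : U}
    (hw : ∀ σ ∈ E, ‖u σ‖ + ‖w‖ ≤ M) : admissible M (u + E.indicator fun _ => w) := by
  refine ⟨hu.1.add (indicator_const hE w).1, ?_⟩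
  filter_upwards [hu.2] with σ hσ
  by_cases hσE : σ ∈ E
  · simpa [hσE] using (norm_add_le _ _).trans (hw σ hσE)
  · simpa [hσE] using hσ

end admissible

theorem convex_setOf_admissible {U : Type*} [NormedAddCommGroup U] [NormedSpace ℝ U] (M : ℝ) :
    Convex ℝ {u : ℝ → U | admissible M u} := by
  intro u hu v hv a b ha hb hab
  refine ⟨(hu.1.const_smul a).add (hv.1.const_smul b), ?_⟩
  filter_upwards [hu.2, hv.2] with σ huσ hvσ
  rw [← mem_closedBall_zero_iff] at huσ hvσ ⊢
  exact convex_closedBall 0 M huσ hvσ ha hb hab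

variable {X U : Type*} [NormedAddCommGroup X] [NormedSpace ℝ X] [CompleteSpace X]
  [NormedAddCommGroup U] [NormedSpace ℝ U] {T : ℝ → X →L[ℝ] X} {B : U →L[ℝ] X}
  {M N τ : ℝ} {u v : ℝ → U} {ψ φ : X}

theorem admissible.exists_ae_norm_le (hu : admissible M u)
    (hT : StronglyContinuousFamily T) (B : U →L[ℝ] X) (τ : ℝ) :
    ∃ C, 0 ≤ C ∧ ∀ᵐ σ ∂volume.restrict (Ioi 0), ∀ t ∈ Icc σ τ, ‖T (t - σ) (B (u σ))‖ ≤ C := by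
  obtain ⟨C, hC0, hC⟩ := hT.exists_opNorm_le_of_mem_Icc τ
  refine ⟨C * (‖B‖ * |M|), by positivity, ?_⟩
  filter_upwards [hu.2, ae_restrict_mem measurableSet_Ioi] with σ hσ hσ0 t ht
  have hmem : t - σ ∈ Icc 0 τ := ⟨sub_nonneg.2 ht.1, (sub_le_self t (le_of_lt hσ0)).trans ht.2⟩
  exact (T _).le_of_opNorm_le_of_le (hC _ hmem) (B.le_opNorm_of_le (hσ.trans (le_abs_self M)))

theorem admissible.integrableOn (hu : admissible M u)
    (hT : StronglyContinuousFamily T) (B : U →L[ℝ] X) (t : ℝ) :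
    IntegrableOn (fun σ => T (t - σ) (B (u σ))) (Ioc 0 t) := by
  obtain ⟨C, -, hC⟩ := hu.exists_ae_norm_le hT B t
  have hmeas : AEStronglyMeasurable (fun σ => B (u σ)) (volume.restrict (Ioc 0 t)) :=
    B.continuous.comp_aestronglyMeasurable (hu.1.mono_set Ioc_subset_Ioi_self)
  refine Integrable.of_bound (hT.aestronglyMeasurable_apply_sub hmeas) C ?_
  filter_upwards [ae_restrict_of_ae_restrict_of_subset Ioc_subset_Ioi_self hC,
    ae_restrict_mem measurableSet_Ioc] with σ hσ hσt
  exact hσ t ⟨hσt.2, le_rfl⟩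

theorem traj_add (hT : StronglyContinuousFamily T) (hu : admissible M u)
    (hv : admissible N v) (t : ℝ) :
    traj T B (ψ + φ) (u + v) t = traj T B ψ u t + traj T B φ v t := by
  simp only [traj, Pi.add_apply, map_add]
  rw [integral_add (hu.integrableOn hT B t) (hv.integrableOn hT B t), add_add_add_comm]

theorem traj_smul (c t : ℝ) : traj T B (c • ψ) (c • u) t = c • traj T B ψ u t := by
  simp only [traj, Pi.smul_apply, map_smul, integral_smul, smul_add]

theorem traj_combo (hT : StronglyContinuousFamily T) (hu : admissible M u)
    (hv : admissible N v) {a b : ℝ} (hab : a + b = 1) (t : ℝ) :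
    traj T B ψ (a • u + b • v) t = a • traj T B ψ u t + b • traj T B ψ v t := by
  rw [← traj_smul, ← traj_smul, ← traj_add hT (hu.smul a) (hv.smul b), Convex.combo_self hab]

theorem traj_eq_add_setIntegral_indicator {t : ℝ} (ht : t ≤ τ) :
    traj T B ψ u t = T t ψ +
      ∫ σ in Ioc 0 τ, (Ioc 0 t).indicator (fun σ => T (t - σ) (B (u σ))) σ := by
  rw [traj, setIntegral_indicator measurableSet_Ioc,
    inter_eq_self_of_subset_right (Ioc_subset_Ioc_right ht)]

theorem tendsto_traj_nhdsLT (hT : StronglyContinuousFamily T)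
    (hu : admissible M u) (hτ : 0 < τ) :
    Tendsto (traj T B ψ u) (𝓝[<] τ) (𝓝 (traj T B ψ u τ)) := by
  obtain ⟨C, hC0, hC⟩ := hu.exists_ae_norm_le hT B τ
  have hint : Tendsto (fun t => ∫ σ in Ioc 0 τ,
      (Ioc 0 t).indicator (fun σ => T (t - σ) (B (u σ))) σ)
      (𝓝[<] τ) (𝓝 (∫ σ in Ioc 0 τ, T (τ - σ) (B (u σ)))) := by
    refine tendsto_integral_filter_of_dominated_convergence (fun _ => C) ?_ ?_
      (integrable_const C) ?_
    · exact .of_forall fun t =>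
        ((hu.integrableOn hT B t).integrable_indicator measurableSet_Ioc).1.restrict
    · filter_upwards [self_mem_nhdsWithin] with t ht
      filter_upwards [ae_restrict_of_ae_restrict_of_subset Ioc_subset_Ioi_self hC] with σ hσ
      by_cases hσt : σ ∈ Ioc 0 t
      · simpa only [indicator_of_mem hσt] using hσ t ⟨hσt.2, le_of_lt ht⟩
      · simpa only [indicator_of_notMem hσt, norm_zero] using hC0
    · rw [← restrict_Ioo_eq_restrict_Ioc]
      filter_upwards [ae_restrict_mem measurableSet_Ioo] with σ hσ
      exact hT.tendsto_indicator_Ioc_apply_sub hσ fun σ => B (u σ)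
  have hfree : Tendsto (fun t => T t ψ) (𝓝[<] τ) (𝓝 (T τ ψ)) :=
    ((hT ψ).continuousAt (Ici_mem_nhds hτ)).tendsto.mono_left nhdsWithin_le_nhds
  refine (hfree.add hint).congr' ?_
  filter_upwards [self_mem_nhdsWithin] with t ht
  exact (traj_eq_add_setIntegral_indicator (le_of_lt ht)).symm

/-- The set of states attainable at time `t` from `ψ` with controls bounded by `M`; at the optimal
time it is separated from the target. -/
def reachableSet (T : ℝ → X →L[ℝ] X) (B : U →L[ℝ] X) (ψ : X) (M t : ℝ) : Set X :=
  (fun u => traj T B ψ u t) '' {u | admissible M u}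

theorem convex_reachableSet (hT : StronglyContinuousFamily T) (t : ℝ) :
    Convex ℝ (reachableSet T B ψ M t) := by
  rintro _ ⟨u, hu, rfl⟩ _ ⟨v, hv, rfl⟩ a b ha hb hab
  exact ⟨a • u + b • v, convex_setOf_admissible M hu hv ha hb hab, traj_combo hT hu hv hab t⟩

theorem disjoint_interior_reachableSet (hT : StronglyContinuousFamily T)
    {K : Set X} (hτ : 0 < τ)
    (hopt : ∀ t, 0 ≤ t → ∀ u, admissible M u → traj T B ψ u t ∈ K → τ ≤ t) :
    Disjoint (interior K) (reachableSet T B ψ M τ) := by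
  rw [disjoint_right]
  rintro _ ⟨u, hu, rfl⟩ huK
  have hhit : ∀ᶠ t in 𝓝[<] τ, traj T B ψ u t ∈ K :=
    tendsto_traj_nhdsLT hT hu hτ (mem_interior_iff_mem_nhds.1 huK)
  obtain ⟨t, htK, ht⟩ := (hhit.and (Ioo_mem_nhdsLT hτ)).exists
  exact (hopt t ht.1.le u hu htK).not_gt ht.2

theorem exists_dual_ne_zero_isMinOn_of_disjoint_interior {E : Type*} [NormedAddCommGroup E]
    [NormedSpace ℝ E] {K R : Set E} (hK : Convex ℝ K) (hKint : (interior K).Nonempty)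
    (hR : Convex ℝ R) (hdisj : Disjoint (interior K) R) (hRK : (R ∩ K).Nonempty) :
    ∃ η : StrongDual ℝ E, η ≠ 0 ∧ ∀ z ∈ R ∩ K, IsMinOn η R z := by
  obtain ⟨η, s, hlt, hge⟩ := geometric_hahn_banach_open hK.interior isOpen_interior hR hdisj
  have hle : K ⊆ {x | η x ≤ s} := calc
    K ⊆ closure (interior K) := by
      rw [hK.closure_interior_eq_closure_of_nonempty_interior hKint]; exact subset_closure
    _ ⊆ {x | η x ≤ s} :=
      closure_minimal (fun x hx => (hlt x hx).le) (isClosed_le η.continuous continuous_const)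
  refine ⟨η, ?_, fun z hz x hx => (hle hz.2).trans (hge x hx)⟩
  rintro rfl
  obtain ⟨x, hx⟩ := hKint
  obtain ⟨z, hz⟩ := hRK
  exact ((hlt x hx).trans_le (hge z hz.1)).false

theorem setIntegral_nonneg_of_isMinOn (hT : StronglyContinuousFamily T)
    {η : StrongDual ℝ X} (hmin : IsMinOn η (reachableSet T B ψ M τ) (traj T B ψ u τ))
    (hu : admissible M u) (hv : admissible N v) (huv : admissible M (u + v)) :
    0 ≤ ∫ σ in Ioc 0 τ, η (T (τ - σ) (B (v σ))) := by
  have hadd : traj T B ψ (u + v) τ = traj T B ψ u τ + traj T B 0 v τ := by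
    rw [← traj_add hT hu hv, add_zero]
  have hle : η (traj T B ψ u τ) ≤ η (traj T B ψ (u + v) τ) := hmin ⟨u + v, huv, rfl⟩
  rw [hadd, map_add, le_add_iff_nonneg_right, traj, map_zero, zero_add] at hle
  rwa [η.integral_comp_comm (hv.integrableOn hT B τ)]

theorem ae_dual_apply_nonneg_of_norm_add_le (hT : StronglyContinuousFamily T)
    {η : StrongDual ℝ X} (hmin : IsMinOn η (reachableSet T B ψ M τ) (traj T B ψ u τ))
    (hu : admissible M u) (w : U) :
    ∀ᵐ σ ∂volume.restrict (Ioc 0 τ), ‖u σ‖ + ‖w‖ ≤ M → 0 ≤ η (T (τ - σ) (B w)) := by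
  let E : Set ℝ := {σ | ‖u σ‖ + ‖w‖ ≤ M}
  have hEmeas : NullMeasurableSet E (volume.restrict (Ioi 0)) :=
    nullMeasurableSet_le (hu.1.norm.aemeasurable.add_const _) aemeasurable_const
  have hint : IntegrableOn (fun σ => η (T (τ - σ) (B (E.indicator (fun _ => w) σ)))) (Ioc 0 τ) :=
    η.integrable_comp ((admissible.indicator_const hEmeas w).integrableOn hT B τ)
  have hnonneg : ∀ᵐ σ ∂volume.restrict (Ioc 0 τ),
      0 ≤ η (T (τ - σ) (B (E.indicator (fun _ => w) σ))) := by
    refine ae_nonneg_of_forall_setIntegral_nonneg hint fun s hs _ => ?_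
    have hsE := hs.nullMeasurableSet.inter hEmeas
    have hpert := setIntegral_nonneg_of_isMinOn hT hmin hu (admissible.indicator_const hsE w)
      (hu.add_indicator_const hsE fun σ hσ => hσ.2)
    rw [← integral_indicator hs]
    convert hpert using 3 with σ
    by_cases hσ : σ ∈ s <;> simp [indicator, hσ]
  filter_upwards [hnonneg] with σ hσ hσE
  rwa [indicator_of_mem (show σ ∈ E from hσE)] at hσ

theorem ae_dual_apply_eq_zero_of_norm_add_le (hT : StronglyContinuousFamily T)
    {η : StrongDual ℝ X} (hmin : IsMinOn η (reachableSet T B ψ M τ) (traj T B ψ u τ))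
    (hu : admissible M u) (w : U) :
    ∀ᵐ σ ∂volume.restrict (Ioc 0 τ), ‖u σ‖ + ‖w‖ ≤ M → η (T (τ - σ) (B w)) = 0 := by
  filter_upwards [ae_dual_apply_nonneg_of_norm_add_le hT hmin hu w,
    ae_dual_apply_nonneg_of_norm_add_le hT hmin hu (-w)] with σ hpos hneg hσ
  simp only [norm_neg, map_neg, Left.nonneg_neg_iff] at hneg
  exact le_antisymm (hneg hσ) (hpos hσ)

theorem ae_dual_apply_eq_zero_of_norm_lt (hT : StronglyContinuousFamily T)
    {η : StrongDual ℝ X} (hmin : IsMinOn η (reachableSet T B ψ M τ) (traj T B ψ u τ))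
    (hu : admissible M u) (w : U) :
    ∀ᵐ σ ∂volume.restrict (Ioc 0 τ), ‖u σ‖ < M → η (T (τ - σ) (B w)) = 0 := by
  have hscaled := ae_all_iff.2 fun n : ℕ =>
    ae_dual_apply_eq_zero_of_norm_add_le hT hmin hu ((1 / ((n : ℝ) + 1)) • w)
  filter_upwards [hscaled] with σ hzero hσ
  have hlim : Tendsto (fun n : ℕ => ‖u σ‖ + ‖(1 / ((n : ℝ) + 1)) • w‖) atTop (𝓝 ‖u σ‖) := by
    simpa using
      ((tendsto_one_div_add_atTop_nhds_zero_nat (𝕜 := ℝ)).smul_const w).norm.const_add ‖u σ‖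
  obtain ⟨n, hn⟩ := (hlim.eventually_le_const hσ).exists
  have hscale := hzero n hn
  rw [map_smul, map_smul, map_smul, smul_eq_zero] at hscale
  exact hscale.resolve_left (by positivity)

theorem ae_dual_comp_eq_zero_of_norm_lt (hT : StronglyContinuousFamily T)
    {η : StrongDual ℝ X} (hmin : IsMinOn η (reachableSet T B ψ M τ) (traj T B ψ u τ))
    (hu : admissible M u) :
    ∀ᵐ σ ∂volume.restrict (Ioc 0 τ), ‖u σ‖ < M → (η ∘L T (τ - σ)) ∘L B = 0 := by
  have hslack : NullMeasurableSet {σ | ‖u σ‖ < M} (volume.restrict (Ioc 0 τ)) :=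
    nullMeasurableSet_lt (hu.1.mono_set Ioc_subset_Ioi_self).norm.aemeasurable aemeasurable_const
  refine (ae_restrict_iff'₀ hslack).1 ?_
  -- Each `w` comes with its own null set; closedness in `σ` makes the null set uniform in `w`.
  have hclosed (w : U) : IsClosed {σ | 0 ≤ τ - σ ∧ η (T (τ - σ) (B w)) = 0} :=
    (hT.isClosed_setOf_dual_apply_eq_zero η (B w)).preimage (continuous_const.sub continuous_id)
  have hzero := ae_forall_mem_of_isClosed hclosed
    (μ := (volume.restrict (Ioc 0 τ)).restrict {σ | ‖u σ‖ < M}) fun w => by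
      refine (ae_restrict_iff'₀ hslack).2 ?_
      filter_upwards [ae_dual_apply_eq_zero_of_norm_lt hT hmin hu w,
        ae_restrict_mem measurableSet_Ioc] with σ hσ hσmem hlt
      exact ⟨sub_nonneg.2 hσmem.2, hσ hlt⟩
  filter_upwards [hzero] with σ hσ
  ext w
  exact (hσ w).2

theorem ae_norm_eq_of_isMinOn (hT : StronglyContinuousFamily T)
    (hUC : UniqueContinuation T B) {η : StrongDual ℝ X} (hη : η ≠ 0)
    (hmin : IsMinOn η (reachableSet T B ψ M τ) (traj T B ψ u τ)) (hu : admissible M u) :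
    ∀ᵐ σ ∂volume.restrict (Ioo 0 τ), ‖u σ‖ = M := by
  have hne : ∀ᵐ σ, 0 < τ - σ → (η ∘L T (τ - σ)) ∘L B ≠ 0 :=
    (Measure.measurePreserving_sub_left volume τ).quasiMeasurePreserving.ae
      (hUC.ae_dual_comp_ne_zero hT hη)
  have hzero := ae_dual_comp_eq_zero_of_norm_lt hT hmin hu
  rw [← restrict_Ioo_eq_restrict_Ioc] at hzero
  filter_upwards [hzero, ae_restrict_of_ae hne, ae_restrict_mem measurableSet_Ioo,
    ae_restrict_of_ae_restrict_of_subset Ioo_subset_Ioi_self hu.2] with σ hσ hσne hσmem hσle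
  exact hσle.eq_of_not_lt fun hlt => hσne (sub_pos.2 hσmem.2) (hσ hlt)

theorem ae_norm_eq_of_forall_le (hT : StronglyContinuousFamily T)
    (hUC : UniqueContinuation T B) {K : Set X} (hK : Convex ℝ K) (hKint : (interior K).Nonempty)
    (hopt : ∀ t, 0 ≤ t → ∀ u, admissible M u → traj T B ψ u t ∈ K → τ ≤ t)
    (hu : admissible M u) (huK : traj T B ψ u τ ∈ K) :
    ∀ᵐ σ ∂volume.restrict (Ioo 0 τ), ‖u σ‖ = M := by
  rcases le_or_gt τ 0 with hτ | hτ
  · simp [Ioo_eq_empty_of_le hτ]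
  have hz : traj T B ψ u τ ∈ reachableSet T B ψ M τ ∩ K := ⟨⟨u, hu, rfl⟩, huK⟩
  obtain ⟨η, hη, hmin⟩ := exists_dual_ne_zero_isMinOn_of_disjoint_interior hK hKint
    (convex_reachableSet hT τ) (disjoint_interior_reachableSet hT hτ hopt) ⟨_, hz⟩
  exact ae_norm_eq_of_isMinOn hT hUC hη (hmin _ hz) hu

theorem stmt7_general [StrictConvexSpace ℝ U] (hT : StronglyContinuousFamily T)
    (hUC : UniqueContinuation T B) {K : Set X} (hK : Convex ℝ K) (hKint : (interior K).Nonempty)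
    (hopt : ∀ t, 0 ≤ t → ∀ u, admissible M u → traj T B ψ u t ∈ K → τ ≤ t) :
    (∀ u, admissible M u → traj T B ψ u τ ∈ K →
      ∀ᵐ t ∂volume.restrict (Ioo 0 τ), ‖u t‖ = M) ∧
    (∀ u₁ u₂, admissible M u₁ → admissible M u₂ → traj T B ψ u₁ τ ∈ K → traj T B ψ u₂ τ ∈ K →
      ∀ᵐ t ∂volume.restrict (Ioo 0 τ), u₁ t = u₂ t) := by
  have hbang (u : ℝ → U) (hu : admissible M u) (huK : traj T B ψ u τ ∈ K) :=
    ae_norm_eq_of_forall_le hT hUC hK hKint hopt hu huK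
  refine ⟨hbang, fun u₁ u₂ h₁ h₂ h₁K h₂K => ?_⟩
  have hhalf : (0 : ℝ) ≤ 1 / 2 := by norm_num
  have hmid : admissible M ((1 / 2 : ℝ) • u₁ + (1 / 2 : ℝ) • u₂) :=
    convex_setOf_admissible M h₁ h₂ hhalf hhalf (add_halves 1)
  have hmidK : traj T B ψ ((1 / 2 : ℝ) • u₁ + (1 / 2 : ℝ) • u₂) τ ∈ K := by
    rw [traj_combo hT h₁ h₂ (add_halves 1)]
    exact hK h₁K h₂K hhalf hhalf (add_halves 1)
  filter_upwards [hbang _ h₁ h₁K, hbang _ h₂ h₂K, hbang _ hmid hmidK] with t ht₁ ht₂ htmid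
  refine eq_of_norm_eq_of_norm_add_eq (ht₁.trans ht₂.symm) ?_
  rw [Pi.add_apply, Pi.smul_apply, Pi.smul_apply, ← smul_add, norm_smul,
    Real.norm_of_nonneg hhalf] at htmid
  linarith

end BangBang

/-- (Bang-bang property.) Assume the unique continuation property: if
`B* T*_t η = 0` for all `t` in a set of positive measure, then `η = 0`. Then any time optimal
control `u*` of `(TP)^M` satisfies `‖u*(t)‖ = M` for a.e. `t ∈ (0,τ*(M))`, and the time
optimal control is unique. -/
theorem stmt7 {X U : Type*} [NormedAddCommGroup X] [InnerProductSpace ℝ X] [CompleteSpace X]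
    [NormedAddCommGroup U] [InnerProductSpace ℝ U] [CompleteSpace U]
    (T : ℝ → X →L[ℝ] X) (B : U →L[ℝ] X)
    (hT0 : T 0 = 1)
    (hTadd : ∀ s t : ℝ, 0 ≤ s → 0 ≤ t → T (s + t) = (T s).comp (T t))
    (hTcont : ∀ x : X, Continuous fun t => T t x)
    -- unique continuation
    (hUC : ∀ η : X, ∀ s : Set ℝ, MeasurableSet s → 0 < volume s →
      (∀ t ∈ s, B.adjoint ((T t).adjoint η) = 0) → η = 0)
    (r M : ℝ) (hr : 0 < r) (hM : 0 < M)
    (ψ : X) (hψ : ψ ∉ Metric.closedBall (0 : X) r)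
    (τs : ℝ) (hτs : 0 ≤ τs) :
    -- bang-bang property of any time optimal control
    (∀ us : ℝ → U, admissible M us →
      traj T B ψ us τs ∈ Metric.closedBall (0 : X) r →
      (∀ t : ℝ, 0 ≤ t → ∀ u : ℝ → U, admissible M u →
        traj T B ψ u t ∈ Metric.closedBall (0 : X) r → τs ≤ t) →
      ∀ᵐ t ∂volume.restrict (Set.Ioo 0 τs), ‖us t‖ = M) ∧
    -- uniqueness of the time optimal control
    (∀ u₁ u₂ : ℝ → U, admissible M u₁ → admissible M u₂ →
      traj T B ψ u₁ τs ∈ Metric.closedBall (0 : X) r →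
      traj T B ψ u₂ τs ∈ Metric.closedBall (0 : X) r →
      (∀ t : ℝ, 0 ≤ t → ∀ u : ℝ → U, admissible M u →
        traj T B ψ u t ∈ Metric.closedBall (0 : X) r → τs ≤ t) →
      ∀ᵐ t ∂volume.restrict (Set.Ioo 0 τs), u₁ t = u₂ t) := by
  have hgen := stmt7_general (fun x => (hTcont x).continuousOn) (.of_adjoint fun η s _ => hUC η s)
    (convex_closedBall (0 : X) r) ⟨0, Metric.ball_subset_interior_closedBall
      (Metric.mem_ball_self hr)⟩ (M := M) (ψ := ψ) (τ := τs)
  exact ⟨fun us hus husK hopt => (hgen hopt).1 us hus husK,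
    fun u₁ u₂ h₁ h₂ h₁K h₂K hopt => (hgen hopt).2 u₁ u₂ h₁ h₂ h₁K h₂K⟩
end

section
/- (Maximum principle for the norm optimal control problem.) Let τ > 0 with ||T_τψ|| > r, and let f̂ be a norm optimal control for (NP)^τ, i.e. f̂ minimizes ||f||_{L^∞((0,τ);U)} subject to z(τ;ψ,f) ∈ B(0,r). Then there exists η ∈ X, η ≠ 0, such that for almost every t ∈ (0,τ), ⟨f̂(t), B*T*_{τ-t}η⟩_U = max{⟨v, B*T*_{τ-t}η⟩ : ||v||_U ≤ N*(τ)}, where N*(τ) is the optimal norm, and η = -z(τ;ψ,f̂). -/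
open MeasureTheory Filter
open scoped RealInnerProductSpace

/-!
The controls `g` with `‖g‖ ≤ N` a.e. form a convex set, hence so do the states they reach at time
`τ`. By optimality, and since `‖T_τ ψ‖ > r`, this set of states does not meet the open ball of
radius `r`: a control steering into the open ball could be scaled down. So `z = z(τ;ψ,f̂)` is its
point of least norm, and `η = -z` satisfies the variational inequality `⟨η, z(τ;ψ,g) - z⟩ ≤ 0`,
that is, `f̂` maximizes `∫ ⟨g(t), p(t)⟩ dt` with `p(t) = B* T*_{τ-t} η` over all controls bounded by
`N`. Comparing `f̂` with the control `N p / ‖p‖` gives `⟨f̂, p⟩ = N ‖p‖` a.e.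

The comparison control has to be strongly measurable although `U` may be nonseparable and `p` is
only known to be weakly continuous; this is supplied by the Pettis measurability theorem.
-/

section WeakMeasurability

variable {𝕜 E α : Type*} [RCLike 𝕜] [NormedAddCommGroup E] [InnerProductSpace 𝕜 E]

theorem stronglyMeasurable_starProjection_comp [MeasurableSpace α] {p : α → E}
    (hp : ∀ v, StronglyMeasurable fun t => inner 𝕜 v (p t))
    (V : Submodule 𝕜 E) [FiniteDimensional 𝕜 V] :
    StronglyMeasurable fun t => V.starProjection (p t) := by
  simp only [(stdOrthonormalBasis 𝕜 V).starProjection_eq_sum_rankOne, sum_apply,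
    InnerProductSpace.rankOne_apply]
  exact Finset.stronglyMeasurable_fun_sum _ fun i _ => (hp _).smul_const _

/-- The **Pettis measurability theorem** in a Hilbert space. -/
theorem stronglyMeasurable_of_isSeparable_range_of_inner [CompleteSpace E] [MeasurableSpace α]
    {p : α → E} (hsep : TopologicalSpace.IsSeparable (Set.range p))
    (hp : ∀ v, StronglyMeasurable fun t => inner 𝕜 v (p t)) : StronglyMeasurable p := by
  obtain ⟨c, hc, hpc⟩ := hsep
  have : Countable c := hc.to_subtype
  let V : Finset c → Submodule 𝕜 E := fun s => Submodule.span 𝕜 ((↑) '' (s : Set c))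
  have hV : Monotone V := fun s s' h => Submodule.span_mono (by gcongr)
  have : ∀ s, FiniteDimensional 𝕜 (V s) := fun s =>
    FiniteDimensional.span_of_finite 𝕜 (s.finite_toSet.image _)
  have hcV : c ⊆ (⨆ s, V s : Submodule 𝕜 E) := fun x hx =>
    Submodule.mem_iSup_of_mem {⟨x, hx⟩} (Submodule.subset_span (by simp))
  have hpV : ∀ t, p t ∈ (⨆ s, V s).topologicalClosure := fun t =>
    closure_mono hcV (hpc (Set.mem_range_self t))
  refine stronglyMeasurable_of_tendsto atTop
    (fun s => stronglyMeasurable_starProjection_comp hp (V s)) (tendsto_pi_nhds.2 fun t => ?_)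
  simpa only [Submodule.starProjection_eq_self_iff.2 (hpV t)] using
    Submodule.starProjection_tendsto_closure_iSup V hV (p t)

theorem isSeparable_range_of_continuous_inner [CompleteSpace E] [TopologicalSpace α]
    [TopologicalSpace.SeparableSpace α] {p : α → E}
    (hp : ∀ v, Continuous fun t => inner 𝕜 v (p t)) :
    TopologicalSpace.IsSeparable (Set.range p) := by
  obtain ⟨c, hc, hcd⟩ := TopologicalSpace.exists_countable_dense α
  let V := (Submodule.span 𝕜 (p '' c)).topologicalClosure
  have : CompleteSpace V := (Submodule.isClosed_topologicalClosure _).completeSpace_coe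
  have hpV : ∀ t, p t ∈ V := fun t => by
    rw [← Submodule.orthogonal_orthogonal V, Submodule.mem_orthogonal]
    intro w hw
    have h_eqOn : Set.EqOn (fun t => inner 𝕜 w (p t)) (fun _ => 0) c := fun s hs =>
      Submodule.inner_left_of_mem_orthogonal
        (Submodule.le_topologicalClosure _ (Submodule.subset_span (Set.mem_image_of_mem p hs))) hw
    exact congrFun ((hp w).ext_on hcd continuous_const h_eqOn) t
  exact ((hc.image p).isSeparable.span (R := 𝕜)).closure.mono (Set.range_subset_iff.2 hpV)

theorem stronglyMeasurable_of_continuous_inner [CompleteSpace E] [TopologicalSpace α]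
    [TopologicalSpace.SeparableSpace α] [MeasurableSpace α] [OpensMeasurableSpace α] {p : α → E}
    (hp : ∀ v, Continuous fun t => inner 𝕜 v (p t)) : StronglyMeasurable p :=
  stronglyMeasurable_of_isSeparable_range_of_inner (isSeparable_range_of_continuous_inner hp)
    fun v => (hp v).measurable.stronglyMeasurable

end WeakMeasurability

section AdmissibleControls

variable {Ω U X : Type*} [MeasurableSpace Ω] {μ : Measure Ω} {N : ℝ}

/-- The controls of size at most `N`: the closed ball of radius `N` of `L^∞(μ; U)`, as a set of
functions rather than of classes modulo a.e. equality. -/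
def admissibleControls [NormedAddCommGroup U] (μ : Measure Ω) (N : ℝ) : Set (Ω → U) :=
  {u | AEStronglyMeasurable u μ ∧ ∀ᵐ t ∂μ, ‖u t‖ ≤ N}

section NormedSpace

variable [NormedAddCommGroup U] [NormedSpace ℝ U] [NormedAddCommGroup X] [NormedSpace ℝ X]

theorem smul_mem_admissibleControls {u : Ω → U} (hu : u ∈ admissibleControls μ N) {c : ℝ}
    (hc : 0 ≤ c) : (fun t => c • u t) ∈ admissibleControls μ (c * N) := by
  refine ⟨hu.1.const_smul c, hu.2.mono fun t ht => ?_⟩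
  rw [norm_smul_of_nonneg hc]
  gcongr

theorem convex_admissibleControls : Convex ℝ (admissibleControls μ N : Set (Ω → U)) := by
  intro u hu v hv a b ha hb hab
  refine ⟨(hu.1.const_smul a).add (hv.1.const_smul b), ?_⟩
  filter_upwards [hu.2, hv.2] with t hut hvt
  have hball := convex_closedBall (0 : U) N (mem_closedBall_zero_iff.2 hut)
    (mem_closedBall_zero_iff.2 hvt) ha hb hab
  exact mem_closedBall_zero_iff.1 hball

theorem convex_image_add_integral {K : Ω → U →L[ℝ] X}
    (hK : ∀ u ∈ admissibleControls μ N, Integrable (fun t => K t (u t)) μ) (y : X) :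
    Convex ℝ ((fun u => y + ∫ t, K t (u t) ∂μ) '' admissibleControls μ N) := by
  rintro _ ⟨u, hu, rfl⟩ _ ⟨v, hv, rfl⟩ a b ha hb hab
  refine ⟨a • u + b • v, convex_admissibleControls hu hv ha hb hab, ?_⟩
  have h_integral : ∫ t, K t ((a • u + b • v) t) ∂μ =
      a • ∫ t, K t (u t) ∂μ + b • ∫ t, K t (v t) ∂μ := by
    simp only [Pi.add_apply, Pi.smul_apply, map_add, map_smul]
    rw [integral_add ((hK u hu).fun_smul a) ((hK v hv).fun_smul b), integral_smul, integral_smul]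
  calc y + ∫ t, K t ((a • u + b • v) t) ∂μ
      = (a + b) • y + (a • ∫ t, K t (u t) ∂μ + b • ∫ t, K t (v t) ∂μ) := by
        rw [h_integral, hab, one_smul]
    _ = _ := by module

theorem aestronglyMeasurable_clm_apply_of_continuous [TopologicalSpace Ω]
    [TopologicalSpace.MetrizableSpace Ω] [SecondCountableTopology Ω] [OpensMeasurableSpace Ω]
    {K : Ω → U →L[ℝ] X} (hK : ∀ v, Continuous fun t => K t v) {u : Ω → U}
    (hu : AEStronglyMeasurable u μ) : AEStronglyMeasurable (fun t => K t (u t)) μ := by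
  obtain ⟨u', hu', h_eq⟩ := hu
  have h_uncurry : StronglyMeasurable (Function.uncurry fun s t => K s (u' t)) :=
    stronglyMeasurable_uncurry_of_continuous_of_stronglyMeasurable (fun t => hK (u' t))
      fun s => (K s).continuous.comp_stronglyMeasurable hu'
  exact ⟨fun t => K t (u' t), h_uncurry.comp_measurable (measurable_id.prodMk measurable_id),
    h_eq.mono fun t ht => congrArg (K t) ht⟩

theorem integrable_clm_apply_of_continuous [TopologicalSpace Ω]
    [TopologicalSpace.MetrizableSpace Ω] [SecondCountableTopology Ω] [OpensMeasurableSpace Ω]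
    [IsFiniteMeasure μ] {K : Ω → U →L[ℝ] X} (hK : ∀ v, Continuous fun t => K t v) {M : ℝ}
    (hM : ∀ᵐ t ∂μ, ‖K t‖ ≤ M) {u : Ω → U} (hu : u ∈ admissibleControls μ N) :
    Integrable (fun t => K t (u t)) μ := by
  refine .of_bound (aestronglyMeasurable_clm_apply_of_continuous hK hu.1) (M * N) ?_
  filter_upwards [hM, hu.2] with t hMt hut
  exact (K t).le_of_opNorm_le_of_le hMt hut

theorem exists_forall_opNorm_le_of_isCompact [CompleteSpace U] {α : Type*} [TopologicalSpace α]
    {s : Set α} (hs : IsCompact s) {K : α → U →L[ℝ] X}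
    (hK : ∀ v, ContinuousOn (fun t => K t v) s) : ∃ M, ∀ t ∈ s, ‖K t‖ ≤ M := by
  obtain ⟨M, hM⟩ := banach_steinhaus (g := fun t : s => K t) fun v =>
    (hs.exists_bound_of_continuousOn (hK v)).imp fun C hC t => hC t t.2
  exact ⟨M, fun t ht => hM ⟨t, ht⟩⟩

end NormedSpace

section Maximizer

variable [NormedAddCommGroup U] [InnerProductSpace ℝ U]

theorem integrable_inner_of_mem_admissibleControls {u p : Ω → U}
    (hu : u ∈ admissibleControls μ N) (hp : Integrable p μ) :
    Integrable (fun t => ⟪u t, p t⟫) μ := by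
  refine (hp.norm.const_mul N).mono' (hu.1.inner hp.1) (hu.2.mono fun t hut => ?_)
  exact (norm_inner_le_norm _ _).trans (by gcongr)

theorem smul_normalize_mem_admissibleControls (hN : 0 ≤ N) {p : Ω → U}
    (hp : AEStronglyMeasurable p μ) :
    (fun t => N • NormedSpace.normalize (p t)) ∈ admissibleControls μ N := by
  refine ⟨(hp.norm.inv₀.smul hp).const_smul N, ae_of_all μ fun t => ?_⟩
  rw [norm_smul_of_nonneg hN]
  refine mul_le_of_le_one_right hN ?_
  rcases eq_or_ne (p t) 0 with h | h
  · simp [h]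
  · exact (NormedSpace.norm_normalize h).le

theorem real_inner_normalize_self (x : U) : ⟪NormedSpace.normalize x, x⟫ = ‖x‖ := by
  rw [NormedSpace.normalize, real_inner_smul_left, real_inner_self_eq_norm_sq, sq,
    ← mul_assoc, inv_mul_mul_self]

theorem inner_ae_eq_mul_norm_of_forall_integral_inner_le (hN : 0 ≤ N) {p f : Ω → U}
    (hp : Integrable p μ) (hf : f ∈ admissibleControls μ N)
    (hmax : ∀ g ∈ admissibleControls μ N, ∫ t, ⟪g t, p t⟫ ∂μ ≤ ∫ t, ⟪f t, p t⟫ ∂μ) :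
    ∀ᵐ t ∂μ, ⟪f t, p t⟫ = N * ‖p t‖ := by
  have hf_le : (fun t => ⟪f t, p t⟫) ≤ᵐ[μ] fun t => N * ‖p t‖ := hf.2.mono fun t hft =>
    (real_inner_le_norm _ _).trans (mul_le_mul_of_nonneg_right hft (norm_nonneg _))
  have hfi := integrable_inner_of_mem_admissibleControls hf hp
  have hpi := hp.norm.const_mul N
  refine (integral_eq_iff_of_ae_le hfi hpi hf_le).1 ((integral_mono_ae hfi hpi hf_le).antisymm ?_)
  simpa only [real_inner_smul_left, real_inner_normalize_self] using
    hmax _ (smul_normalize_mem_admissibleControls hN hp.1)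

theorem isGreatest_inner_image_closedBall {u q : U} (hu : ‖u‖ ≤ N) (huq : ⟪u, q⟫ = N * ‖q‖) :
    IsGreatest ((fun v => ⟪v, q⟫) '' Metric.closedBall 0 N) ⟪u, q⟫ := by
  refine ⟨⟨u, mem_closedBall_zero_iff.2 hu, rfl⟩, ?_⟩
  rintro _ ⟨v, hv, rfl⟩
  rw [mem_closedBall_zero_iff] at hv
  calc ⟪v, q⟫ ≤ ‖v‖ * ‖q‖ := real_inner_le_norm v q
    _ ≤ N * ‖q‖ := by gcongr
    _ = ⟪u, q⟫ := huq.symm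

end Maximizer

end AdmissibleControls

section Adjoint

variable {Ω U X : Type*} [MeasurableSpace Ω] {μ : Measure Ω}
  [NormedAddCommGroup U] [InnerProductSpace ℝ U] [CompleteSpace U]
  [NormedAddCommGroup X] [InnerProductSpace ℝ X] [CompleteSpace X] {K : Ω → U →L[ℝ] X}

theorem integral_inner_adjoint {u : Ω → U} (hu : Integrable (fun t => K t (u t)) μ) (η : X) :
    ∫ t, ⟪u t, (K t).adjoint η⟫ ∂μ = ⟪η, ∫ t, K t (u t) ∂μ⟫ := by
  simp only [ContinuousLinearMap.adjoint_inner_right, real_inner_comm η, integral_inner hu]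

theorem integrable_adjoint_apply_of_continuous [TopologicalSpace Ω]
    [TopologicalSpace.SeparableSpace Ω] [OpensMeasurableSpace Ω] [IsFiniteMeasure μ]
    (hK : ∀ v, Continuous fun t => K t v) {M : ℝ} (hM : ∀ᵐ t ∂μ, ‖K t‖ ≤ M) (η : X) :
    Integrable (fun t => (K t).adjoint η) μ := by
  have h_weak : ∀ v, Continuous fun t => ⟪v, (K t).adjoint η⟫ := fun v => by
    simpa only [ContinuousLinearMap.adjoint_inner_right] using (hK v).inner continuous_const
  refine .of_bound (stronglyMeasurable_of_continuous_inner h_weak).aestronglyMeasurable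
    (M * ‖η‖) (hM.mono fun t hMt => ?_)
  exact ((K t).adjoint).le_of_opNorm_le_of_le
    ((LinearIsometryEquiv.norm_map ContinuousLinearMap.adjoint (K t)).trans_le hMt) le_rfl

end Adjoint

section NormOptimalControl

variable {Ω U X : Type*} [MeasurableSpace Ω] {μ : Measure Ω} {y : X} {r N : ℝ} {f : Ω → U}

/-- `f` solves the norm optimal control problem `(NP)` with optimal norm `N`: among the controls `u`
steering the free state `y` to a final state `y + ∫ K_t u(t) dμ(t)` in the closed ball of radius
`r`, it has the least `L^∞` norm. For an evolution `T` on `(0, τ)` one takes `y = T_τ ψ` and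
`K_t = T_{τ-t} B`. -/
structure IsNormOptimalControl [NormedAddCommGroup U] [NormedSpace ℝ U]
    [NormedAddCommGroup X] [NormedSpace ℝ X] (μ : Measure Ω) (K : Ω → U →L[ℝ] X) (y : X) (r : ℝ)
    (f : Ω → U) (N : ℝ) : Prop where
  mem_admissibleControls : f ∈ admissibleControls μ N
  norm_le : ‖y + ∫ t, K t (f t) ∂μ‖ ≤ r
  optimal : ∀ C, 0 ≤ C → ∀ g ∈ admissibleControls μ C, ‖y + ∫ t, K t (g t) ∂μ‖ ≤ r → N ≤ C

namespace IsNormOptimalControl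

section NormedSpace

variable [NormedAddCommGroup U] [NormedSpace ℝ U] [NormedAddCommGroup X] [NormedSpace ℝ X]
  {K : Ω → U →L[ℝ] X}

theorem pos (h : IsNormOptimalControl μ K y r f N) (hy : r < ‖y‖) : 0 < N := by
  by_contra! hN
  have h_integral : ∫ t, K t (f t) ∂μ = 0 :=
    integral_eq_zero_of_ae <| h.mem_admissibleControls.2.mono fun t ht => by
      simp [norm_le_zero_iff.1 (ht.trans hN)]
  have h_norm := h.norm_le
  rw [h_integral, add_zero] at h_norm
  exact h_norm.not_gt hy

theorem le_norm (h : IsNormOptimalControl μ K y r f N) (hy : r < ‖y‖) {g : Ω → U}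
    (hg : g ∈ admissibleControls μ N) : r ≤ ‖y + ∫ t, K t (g t) ∂μ‖ := by
  by_contra! hlt
  set w := y + ∫ t, K t (g t) ∂μ with hw
  have hd : 0 < ‖y‖ - ‖w‖ := by linarith
  -- The scaling factor for which the convexity bound on the norm of the new final state is `r`.
  set m := (‖y‖ - r) / (‖y‖ - ‖w‖) with hm
  have hm0 : 0 ≤ m := div_nonneg (by linarith) hd.le
  have hm1 : m < 1 := (div_lt_one hd).2 (by linarith)
  have h_state : y + ∫ t, K t (m • g t) ∂μ = (1 - m) • y + m • w := by
    simp only [map_smul, integral_smul, hw]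
    module
  have h_target : ‖y + ∫ t, K t (m • g t) ∂μ‖ ≤ r :=
    calc ‖y + ∫ t, K t (m • g t) ∂μ‖ = ‖(1 - m) • y + m • w‖ := by rw [h_state]
      _ ≤ (1 - m) * ‖y‖ + m * ‖w‖ := by
        refine (norm_add_le _ _).trans_eq ?_
        rw [norm_smul_of_nonneg (sub_nonneg.2 hm1.le), norm_smul_of_nonneg hm0]
      _ = r := by rw [hm]; field_simp; ring
  have hNm : N ≤ m * N :=
    h.optimal _ (mul_nonneg hm0 (h.pos hy).le) _ (smul_mem_admissibleControls hg hm0) h_target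
  exact hNm.not_gt (mul_lt_of_lt_one_left (h.pos hy) hm1)

end NormedSpace

section InnerProductSpace

variable [NormedAddCommGroup U] [InnerProductSpace ℝ U]
  [NormedAddCommGroup X] [InnerProductSpace ℝ X] {K : Ω → U →L[ℝ] X}

theorem inner_neg_integral_le (h : IsNormOptimalControl μ K y r f N) (hy : r < ‖y‖)
    (hK : ∀ u ∈ admissibleControls μ N, Integrable (fun t => K t (u t)) μ)
    {g : Ω → U} (hg : g ∈ admissibleControls μ N) :
    ⟪-(y + ∫ t, K t (f t) ∂μ), ∫ t, K t (g t) ∂μ⟫ ≤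
      ⟪-(y + ∫ t, K t (f t) ∂μ), ∫ t, K t (f t) ∂μ⟫ := by
  set A := (fun u => y + ∫ t, K t (u t) ∂μ) '' admissibleControls μ N
  set z := y + ∫ t, K t (f t) ∂μ with hz
  have hzA : z ∈ A := Set.mem_image_of_mem _ h.mem_admissibleControls
  have hz_min : ∀ w ∈ A, ‖z‖ ≤ ‖w‖ := by
    rintro _ ⟨u, hu, rfl⟩
    exact h.norm_le.trans (h.le_norm hy hu)
  have hz_iInf : ‖0 - z‖ = ⨅ w : A, ‖0 - (w : X)‖ := by
    simp only [zero_sub, norm_neg]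
    have : Nonempty A := ⟨⟨z, hzA⟩⟩
    exact le_antisymm (le_ciInf fun w => hz_min w w.2)
      (ciInf_le ⟨0, Set.forall_mem_range.2 fun w : A => norm_nonneg (w : X)⟩ ⟨z, hzA⟩)
  have h_var := (norm_eq_iInf_iff_real_inner_le_zero (convex_image_add_integral hK y) hzA).1
    hz_iInf _ (Set.mem_image_of_mem _ hg)
  rwa [zero_sub, hz, add_sub_add_left_eq_sub, ← hz, inner_sub_right, sub_nonpos] at h_var

theorem isGreatest_inner_adjoint [CompleteSpace U] [CompleteSpace X] [TopologicalSpace Ω]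
    [TopologicalSpace.MetrizableSpace Ω] [SecondCountableTopology Ω] [OpensMeasurableSpace Ω]
    [IsFiniteMeasure μ] (h : IsNormOptimalControl μ K y r f N) (hy : r < ‖y‖)
    (hK : ∀ v, Continuous fun t => K t v) {M : ℝ} (hM : ∀ᵐ t ∂μ, ‖K t‖ ≤ M) :
    ∀ᵐ t ∂μ, IsGreatest ((fun v => ⟪v, (K t).adjoint (-(y + ∫ s, K s (f s) ∂μ))⟫) ''
      Metric.closedBall 0 N) ⟪f t, (K t).adjoint (-(y + ∫ s, K s (f s) ∂μ))⟫ := by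
  have hKi : ∀ u ∈ admissibleControls μ N, Integrable (fun t => K t (u t)) μ := fun u hu =>
    integrable_clm_apply_of_continuous hK hM hu
  have hf := h.mem_admissibleControls
  have h_eq := inner_ae_eq_mul_norm_of_forall_integral_inner_le (h.pos hy).le
    (integrable_adjoint_apply_of_continuous hK hM _) hf fun g hg => by
      rw [integral_inner_adjoint (hKi g hg), integral_inner_adjoint (hKi f hf)]
      exact h.inner_neg_integral_le hy hKi hg
  filter_upwards [hf.2, h_eq] with t hft h_eqt
  exact isGreatest_inner_image_closedBall hft h_eqt

end InnerProductSpace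

end IsNormOptimalControl

end NormOptimalControl

theorem traj_eq_add_setIntegral_Ioo {X U : Type*} [NormedAddCommGroup X] [NormedSpace ℝ X]
    [CompleteSpace X] [NormedAddCommGroup U] [NormedSpace ℝ U] (T : ℝ → X →L[ℝ] X)
    (B : U →L[ℝ] X) (ψ : X) (u : ℝ → U) (τ : ℝ) :
    traj T B ψ u τ = T τ ψ + ∫ t in Set.Ioo 0 τ, ((T (τ - t)).comp B) (u t) := by
  rw [traj, integral_Ioc_eq_integral_Ioo]
  rfl

theorem stmt8_general {X U : Type*} [NormedAddCommGroup X] [InnerProductSpace ℝ X]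
    [CompleteSpace X] [NormedAddCommGroup U] [InnerProductSpace ℝ U] [CompleteSpace U]
    (T : ℝ → X →L[ℝ] X) (B : U →L[ℝ] X) (hTcont : ∀ x : X, Continuous fun t => T t x)
    (r : ℝ) (hr : 0 < r) (ψ : X) (τ : ℝ) (hTψ : r < ‖T τ ψ‖) (f : ℝ → U) (N : ℝ)
    (hf_meas : AEStronglyMeasurable f (volume.restrict (Set.Ioo 0 τ)))
    (hf_bound : ∀ᵐ t ∂volume.restrict (Set.Ioo 0 τ), ‖f t‖ ≤ N)
    (hf_target : traj T B ψ f τ ∈ Metric.closedBall (0 : X) r)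
    (hf_opt : ∀ g : ℝ → U, ∀ C : ℝ, 0 ≤ C →
      AEStronglyMeasurable g (volume.restrict (Set.Ioo 0 τ)) →
      (∀ᵐ t ∂volume.restrict (Set.Ioo 0 τ), ‖g t‖ ≤ C) →
      traj T B ψ g τ ∈ Metric.closedBall (0 : X) r → N ≤ C) :
    ∃ η : X, η ≠ 0 ∧ η = -traj T B ψ f τ ∧
      ∀ᵐ t ∂volume.restrict (Set.Ioo 0 τ),
        IsGreatest ((fun v : U => ⟪v, B.adjoint ((T (τ - t)).adjoint η)⟫) ''
            Metric.closedBall (0 : U) N)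
          ⟪f t, B.adjoint ((T (τ - t)).adjoint η)⟫ := by
  let K : ℝ → U →L[ℝ] X := fun t => (T (τ - t)).comp B
  have hK : ∀ v, Continuous fun t => K t v := fun v => (hTcont (B v)).comp (continuous_sub_left τ)
  obtain ⟨M, hM⟩ := exists_forall_opNorm_le_of_isCompact (isCompact_Icc (a := 0) (b := τ))
    fun v => (hK v).continuousOn
  have hM_ae : ∀ᵐ t ∂volume.restrict (Set.Ioo 0 τ), ‖K t‖ ≤ M :=
    (ae_restrict_mem measurableSet_Ioo).mono fun t ht => hM t (Set.Ioo_subset_Icc_self ht)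
  simp only [mem_closedBall_zero_iff, traj_eq_add_setIntegral_Ioo] at hf_target hf_opt ⊢
  have hf : IsNormOptimalControl (volume.restrict (Set.Ioo 0 τ)) K (T τ ψ) r f N :=
    ⟨⟨hf_meas, hf_bound⟩, hf_target, fun C hC g hg => hf_opt g C hC hg.1 hg.2⟩
  refine ⟨_, neg_ne_zero.2 (norm_pos_iff.1 ?_), rfl, ?_⟩
  · exact hr.trans_le (hf.le_norm hTψ hf.mem_admissibleControls)
  · simpa only [K, ContinuousLinearMap.adjoint_comp, ContinuousLinearMap.comp_apply] using
      hf.isGreatest_inner_adjoint hTψ hK hM_ae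

/-- (Maximum principle for the norm optimal control problem.) Let `τ > 0`
with `‖T_τ ψ‖ > r` and let `f̂` be a norm optimal control for `(NP)^τ`, with optimal norm
`N*(τ)`. Then there exists `η ≠ 0` such that for a.e. `t ∈ (0,τ)`,
`⟨f̂(t), B* T*_{τ-t} η⟩ = max {⟨v, B* T*_{τ-t} η⟩ : ‖v‖ ≤ N*(τ)}`, and `η = -z(τ;ψ,f̂)`. -/
theorem stmt8 {X U : Type*} [NormedAddCommGroup X] [InnerProductSpace ℝ X] [CompleteSpace X]
    [NormedAddCommGroup U] [InnerProductSpace ℝ U] [CompleteSpace U]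
    (T : ℝ → X →L[ℝ] X) (B : U →L[ℝ] X)
    (hT0 : T 0 = 1)
    (hTadd : ∀ s t : ℝ, 0 ≤ s → 0 ≤ t → T (s + t) = (T s).comp (T t))
    (hTcont : ∀ x : X, Continuous fun t => T t x)
    (r : ℝ) (hr : 0 < r) (ψ : X)
    (τ : ℝ) (hτ : 0 < τ) (hTψ : r < ‖T τ ψ‖)
    -- `f̂` is a norm optimal control for `(NP)^τ`, with optimal norm `N*(τ) = N`
    (f : ℝ → U) (N : ℝ) (hN : 0 ≤ N)
    (hf_meas : AEStronglyMeasurable f (volume.restrict (Set.Ioo 0 τ)))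
    (hf_bound : ∀ᵐ t ∂volume.restrict (Set.Ioo 0 τ), ‖f t‖ ≤ N)
    (hf_target : traj T B ψ f τ ∈ Metric.closedBall (0 : X) r)
    (hf_opt : ∀ g : ℝ → U, ∀ C : ℝ, 0 ≤ C →
      AEStronglyMeasurable g (volume.restrict (Set.Ioo 0 τ)) →
      (∀ᵐ t ∂volume.restrict (Set.Ioo 0 τ), ‖g t‖ ≤ C) →
      traj T B ψ g τ ∈ Metric.closedBall (0 : X) r → N ≤ C) :
    ∃ η : X, η ≠ 0 ∧ η = -traj T B ψ f τ ∧
      ∀ᵐ t ∂volume.restrict (Set.Ioo 0 τ),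
        IsGreatest ((fun v : U => ⟪v, B.adjoint ((T (τ - t)).adjoint η)⟫) ''
            Metric.closedBall (0 : U) N)
          ⟪f t, B.adjoint ((T (τ - t)).adjoint η)⟫ := by
  exact stmt8_general T B hTcont r hr ψ τ hTψ f N hf_meas hf_bound hf_target hf_opt
end

section
/- Under the assumptions of the previous statement, the optimal value V*(τ) = min_η J^τ(η) satisfies V*(τ) = -(1/2) N*(τ)². -/
open MeasureTheory Filter
open scoped RealInnerProductSpace

/-- The functional `J^τ(η) = ½(∫_0^τ ‖B*T*_{τ-t}η‖ dt)² + ⟨ψ, T*_τ η⟩ + r‖η‖`. -/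
noncomputable def Jfun {X U : Type*} [NormedAddCommGroup X] [InnerProductSpace ℝ X]
    [CompleteSpace X] [NormedAddCommGroup U] [InnerProductSpace ℝ U] [CompleteSpace U]
    (T : ℝ → X →L[ℝ] X) (B : U →L[ℝ] X) (r : ℝ) (ψ : X) (τ : ℝ) (η : X) : ℝ :=
  (1 / 2) * (∫ t in Set.Ioc 0 τ, ‖B.adjoint ((T (τ - t)).adjoint η)‖) ^ 2 +
    ⟪ψ, (T τ).adjoint η⟫ + r * ‖η‖

/-!
Since `J` is half the square of one positively homogeneous function plus another one, optimizing
along each ray shows that `J ≥ -C² / 2` everywhere if and only if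
`-⟪T_τ ψ, η⟫ ≤ r ‖η‖ + C ∫_0^τ ‖B* T*_{τ-t} η‖ dt` for all `η`. By the Hahn-Banach theorem on the
graph of the observation operator `η ↦ B* T*_{τ-·} η`, this inequality holds if and only if
`-⟪T_τ ψ, η⟫ = ⟪x, η⟫ + ∫_0^τ ⟪f t, B* T*_{τ-t} η⟫ dt` with `‖x‖ ≤ r` and `‖f‖ ≤ C` almost
everywhere. That identity says that the control `f` steers `ψ` to `-x`. Hence a bound `C ≥ 0` is
sufficient for steering exactly when `-C² / 2` is a lower bound of `J`, and the least such `C`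
corresponds to the greatest lower bound.
-/

section Measurability

variable {𝕜 H : Type*} [RCLike 𝕜] [NormedAddCommGroup H] [InnerProductSpace 𝕜 H] [CompleteSpace H]

/- The projections of `g` onto the spans of finitely many `d i` are measurable, because in an
orthonormal basis their coordinates are inner products with `g`, and they converge to `g`. -/
theorem aestronglyMeasurable_of_inner {α : Type*} [MeasurableSpace α] {μ : Measure α} {g : α → H}
    (d : ℕ → H) (hd : ∀ᵐ t ∂μ, g t ∈ (Submodule.span 𝕜 (Set.range d)).topologicalClosure)
    (hg : ∀ v : H, AEStronglyMeasurable (fun t => inner 𝕜 v (g t)) μ) :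
    AEStronglyMeasurable g μ := by
  let V : ℕ → Submodule 𝕜 H := fun n => Submodule.span 𝕜 (d '' Set.Iio n)
  have hVmono : Monotone V := fun m n hmn =>
    Submodule.span_mono (Set.image_mono (Set.Iio_subset_Iio hmn))
  have hVsup : ⨆ n, V n = Submodule.span 𝕜 (Set.range d) := by
    rw [← Submodule.span_iUnion, ← Set.image_iUnion, Set.iUnion_Iio, Set.image_univ]
  have hVfin (n : ℕ) : FiniteDimensional 𝕜 (V n) :=
    FiniteDimensional.span_of_finite 𝕜 ((Set.finite_Iio n).image d)
  refine aestronglyMeasurable_of_tendsto_ae atTop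
    (f := fun n t => (V n).starProjection (g t)) (fun n => ?_) ?_
  · have hproj : (fun t => (V n).starProjection (g t)) = fun t =>
        ∑ i, inner 𝕜 (stdOrthonormalBasis 𝕜 (V n) i : H) (g t) •
          (stdOrthonormalBasis 𝕜 (V n) i : H) := by
      ext t
      simp [(stdOrthonormalBasis 𝕜 (V n)).starProjection_eq_sum_rankOne]
    rw [hproj]
    exact Finset.aestronglyMeasurable_fun_sum _ fun i _ => (hg _).smul_const _
  · filter_upwards [hd] with t ht
    have hlim := Submodule.starProjection_tendsto_closure_iSup V hVmono (g t)
    rwa [hVsup, Submodule.starProjection_eq_self_iff.2 ht] at hlim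

theorem aestronglyMeasurable_restrict_of_continuousOn_inner {α : Type*} [TopologicalSpace α]
    [SecondCountableTopology α] [MeasurableSpace α] [OpensMeasurableSpace α] {μ : Measure α}
    {s : Set α} (hs : MeasurableSet s) {g : α → H}
    (hg : ∀ v : H, ContinuousOn (fun t => inner 𝕜 v (g t)) s) :
    AEStronglyMeasurable g (μ.restrict s) := by
  obtain rfl | hne := s.eq_empty_or_nonempty
  · simp
  have := hne.to_subtype
  refine aestronglyMeasurable_of_inner (𝕜 := 𝕜) (fun i => g (TopologicalSpace.denseSeq s i))
    ((ae_restrict_mem hs).mono fun t ht => ?_) fun v => (hg v).aestronglyMeasurable hs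
  rw [← Submodule.orthogonal_orthogonal_eq_closure, Submodule.mem_orthogonal]
  intro v hv
  have hzero : s.domRestrict (fun t => inner 𝕜 v (g t)) = fun _ => 0 := by
    refine (hg v).domRestrict.ext_on (TopologicalSpace.denseRange_denseSeq s) continuous_const ?_
    rintro _ ⟨i, rfl⟩
    exact (Submodule.mem_orthogonal' _ _).1 hv _ (Submodule.subset_span ⟨i, rfl⟩)
  exact congrFun hzero ⟨t, ht⟩

end Measurability

section OperatorFamily

variable {𝕜 E F : Type*} [NontriviallyNormedField 𝕜] [NormedAddCommGroup E] [NormedSpace 𝕜 E]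
  [NormedAddCommGroup F] [NormedSpace 𝕜 F]

theorem exists_opNorm_le_of_isCompact [CompleteSpace E] {α : Type*} [TopologicalSpace α]
    {K : Set α} (hK : IsCompact K) {S : α → E →L[𝕜] F}
    (hS : ∀ x : E, ContinuousOn (fun t => S t x) K) :
    ∃ M, ∀ t ∈ K, ‖S t‖ ≤ M := by
  obtain ⟨M, hM⟩ := banach_steinhaus (g := fun t : K => S t) fun x =>
    let ⟨C, hC⟩ := hK.exists_bound_of_continuousOn (hS x)
    ⟨C, fun t => hC t t.2⟩
  exact ⟨M, fun t ht => hM ⟨t, ht⟩⟩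

variable {Ω : Type*} [MeasurableSpace Ω] {μ : Measure Ω}

theorem aestronglyMeasurable_apply_simpleFunc {S : Ω → E →L[𝕜] F}
    (hS : ∀ x : E, AEStronglyMeasurable (fun t => S t x) μ) (φ : SimpleFunc Ω E) :
    AEStronglyMeasurable (fun t => S t (φ t)) μ := by
  classical
  have hsum : (fun t => S t (φ t)) =
      fun t => ∑ x ∈ φ.range, (φ ⁻¹' {x}).indicator (fun t => S t x) t := by
    ext t
    simp [Set.indicator_apply]
  rw [hsum]
  exact Finset.aestronglyMeasurable_fun_sum _ fun x _ =>
    (hS x).indicator (φ.measurableSet_fiber x)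

theorem aestronglyMeasurable_apply {S : Ω → E →L[𝕜] F}
    (hS : ∀ x : E, AEStronglyMeasurable (fun t => S t x) μ) {f : Ω → E}
    (hf : AEStronglyMeasurable f μ) : AEStronglyMeasurable (fun t => S t (f t)) μ := by
  refine aestronglyMeasurable_of_tendsto_ae atTop
    (fun n => aestronglyMeasurable_apply_simpleFunc hS (hf.stronglyMeasurable_mk.approx n)) ?_
  filter_upwards [hf.ae_eq_mk] with t ht
  rw [ht]
  exact ((S t).continuous.tendsto _).comp (hf.stronglyMeasurable_mk.tendsto_approx t)

theorem integrable_apply {S : Ω → E →L[𝕜] F}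
    (hS : ∀ x : E, AEStronglyMeasurable (fun t => S t x) μ) {M : ℝ} (hM : ∀ᵐ t ∂μ, ‖S t‖ ≤ M)
    {f : Ω → E} (hf : Integrable f μ) : Integrable (fun t => S t (f t)) μ := by
  refine (hf.norm.const_mul M).mono' (aestronglyMeasurable_apply hS hf.aestronglyMeasurable) ?_
  exact hM.mono fun t ht => (S t).le_of_opNorm_le ht _

end OperatorFamily

section Functionals

theorem exists_dual_add_comp_of_le_seminorm {E F : Type*} [AddCommGroup E] [Module ℝ E]
    [AddCommGroup F] [Module ℝ F] (p : Seminorm ℝ E) (q : Seminorm ℝ F) (A : E →ₗ[ℝ] F)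
    (ℓ : Module.Dual ℝ E) (hℓ : ∀ x, ℓ x ≤ p x + q (A x)) :
    ∃ (φ : Module.Dual ℝ E) (χ : Module.Dual ℝ F),
      (∀ x, |φ x| ≤ p x) ∧ (∀ y, |χ y| ≤ q y) ∧ ∀ x, ℓ x = φ x + χ (A x) := by
  obtain ⟨Φ, hΦℓ, hΦ⟩ := Module.Dual.exists_extension_of_le_seminorm_real A.graph
    (ℓ ∘ₗ LinearMap.fst ℝ E F ∘ₗ A.graph.subtype)
    (p := p.comp (LinearMap.fst ℝ E F) + q.comp (LinearMap.snd ℝ E F)) (by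
      rintro ⟨⟨x, y⟩, hy : y = A x⟩
      simpa [hy] using hℓ x)
  refine ⟨Φ ∘ₗ LinearMap.inl ℝ E F, Φ ∘ₗ LinearMap.inr ℝ E F, fun x => ?_, fun y => ?_,
    fun x => ?_⟩
  · simpa using hΦ (x, 0)
  · simpa using hΦ (0, y)
  · have hx : Φ (x, A x) = ℓ x := hΦℓ ⟨(x, A x), rfl⟩
    simp [← hx, ← map_add]

theorem exists_inner_eq_of_abs_le {H : Type*} [NormedAddCommGroup H] [InnerProductSpace ℝ H]
    [CompleteSpace H] {K : ℝ} (hK : 0 ≤ K) (φ : Module.Dual ℝ H) (hφ : ∀ x, |φ x| ≤ K * ‖x‖) :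
    ∃ y : H, ‖y‖ ≤ K ∧ ∀ x, φ x = ⟪y, x⟫ := by
  refine ⟨(InnerProductSpace.toDual ℝ H).symm (φ.mkContinuous K hφ), ?_, fun x => ?_⟩
  · rw [LinearIsometryEquiv.norm_map]
    exact φ.mkContinuous_norm_le hK hφ
  · rw [InnerProductSpace.toDual_symm_apply, LinearMap.mkContinuous_apply]

end Functionals

section Lebesgue

variable {Ω : Type*} [MeasurableSpace Ω] {μ : Measure Ω} [IsFiniteMeasure μ]
  {E : Type*} [NormedAddCommGroup E]

theorem integrable_coeFn_of_one_le {p : ENNReal} (hp : 1 ≤ p) (u : Lp E p μ) :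
    Integrable u μ :=
  (Lp.memLp u).integrable hp

variable [NormedSpace ℝ E]

variable (μ E) in
/-- The `L¹` norm, as a seminorm on `L²` of a finite measure. On the Hilbert space `L²` the Riesz
representation theorem yields the essentially bounded function that represents a functional
dominated by this seminorm, so the duality between `L¹` and `L^∞` is not needed. -/
noncomputable def l1Seminorm : Seminorm ℝ (Lp E 2 μ) :=
  Seminorm.of (fun u => ∫ t, ‖u t‖ ∂μ)
    (fun u v => by
      have hnorm_int (w : Lp E 2 μ) : Integrable (fun t => ‖w t‖) μ :=
        (integrable_coeFn_of_one_le one_le_two w).norm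
      rw [← integral_add (hnorm_int u) (hnorm_int v)]
      refine integral_mono_ae (hnorm_int _) ((hnorm_int u).add (hnorm_int v)) ?_
      filter_upwards [Lp.coeFn_add u v] with t ht
      simpa only [ht, Pi.add_apply] using norm_add_le (u t) (v t))
    (fun c u => by
      rw [← integral_const_mul]
      refine integral_congr_ae ?_
      filter_upwards [Lp.coeFn_smul c u] with t ht
      simp only [ht, Pi.smul_apply, norm_smul])

theorem l1Seminorm_apply (u : Lp E 2 μ) : l1Seminorm μ E u = ∫ t, ‖u t‖ ∂μ := rfl

theorem l1Seminorm_le (u : Lp E 2 μ) : l1Seminorm μ E u ≤ √(μ.real Set.univ) * ‖u‖ := by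
  have hle := eLpNorm_le_eLpNorm_mul_rpow_measure_univ (p := 1) (q := 2) one_le_two
    (Lp.aestronglyMeasurable u)
  have hexp : (1 : ℝ) / (1 : ENNReal).toReal - 1 / (2 : ENNReal).toReal = 1 / 2 := by norm_num
  rw [hexp] at hle
  rw [l1Seminorm_apply, integral_norm_eq_lintegral_enorm (Lp.aestronglyMeasurable u),
    ← eLpNorm_one_eq_lintegral_enorm, mul_comm, Lp.norm_def, Real.sqrt_eq_rpow, Measure.real,
    ENNReal.toReal_rpow, ← ENNReal.toReal_mul]
  exact ENNReal.toReal_mono (ENNReal.mul_ne_top (Lp.eLpNorm_ne_top u)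
    (ENNReal.rpow_ne_top_of_nonneg (by norm_num) (measure_ne_top μ _))) hle

variable {U : Type*} [NormedAddCommGroup U] [InnerProductSpace ℝ U]

theorem ae_norm_le_of_inner_le {C : ℝ} (hC : 0 ≤ C) (f : Lp U 2 μ)
    (hf : ∀ u : Lp U 2 μ, ⟪f, u⟫ ≤ C * l1Seminorm μ U u) : ∀ᵐ t ∂μ, ‖f t‖ ≤ C := by
  let s : Set Ω := {t | C < ‖f t‖}
  have hs : MeasurableSet s := (Lp.stronglyMeasurable f).norm.measurable measurableSet_Ioi
  have hfs : MemLp (s.indicator f) 2 μ := (Lp.memLp f).indicator hs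
  let excess : Ω → ℝ := s.indicator fun t => ‖f t‖ ^ 2 - C * ‖f t‖
  have hexcess : 0 ≤ excess := Set.indicator_nonneg fun t ht => by
    have hCt : C < ‖f t‖ := ht
    nlinarith
  have hsq_int : Integrable (fun t => ‖f t‖ ^ 2) μ := (Lp.memLp f).integrable_norm_pow two_ne_zero
  have hnorm_int : Integrable (fun t => C * ‖f t‖) μ :=
    (integrable_coeFn_of_one_le one_le_two f).norm.const_mul C
  have hinner : ⟪f, hfs.toLp⟫ = ∫ t in s, ‖f t‖ ^ 2 ∂μ := by
    rw [L2.inner_def, ← integral_indicator hs]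
    refine integral_congr_ae ?_
    filter_upwards [hfs.coeFn_toLp] with t ht
    by_cases hts : t ∈ s <;> simp [ht, hts]
  have hnorm : l1Seminorm μ U hfs.toLp = ∫ t in s, ‖f t‖ ∂μ := by
    rw [l1Seminorm_apply, ← integral_indicator hs]
    refine integral_congr_ae ?_
    filter_upwards [hfs.coeFn_toLp] with t ht
    rw [ht, norm_indicator_eq_indicator_norm]
  have hle : ∫ t, excess t ∂μ ≤ 0 := by
    rw [integral_indicator hs, integral_sub hsq_int.integrableOn hnorm_int.integrableOn,
      integral_const_mul, ← hinner, ← hnorm, sub_nonpos]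
    exact hf hfs.toLp
  have hzero := (integral_eq_zero_iff_of_nonneg hexcess ((hsq_int.sub hnorm_int).indicator hs)).1
    (hle.antisymm (integral_nonneg hexcess))
  filter_upwards [hzero] with t ht
  by_contra! hts
  have hexcess_zero : ‖f t‖ ^ 2 - C * ‖f t‖ = 0 := by simpa [excess, s, hts] using ht
  nlinarith

theorem exists_inner_add_inner_of_le [CompleteSpace U] {X : Type*} [NormedAddCommGroup X]
    [InnerProductSpace ℝ X] [CompleteSpace X] {r C : ℝ} (hr : 0 ≤ r) (hC : 0 ≤ C)
    (A : X →ₗ[ℝ] Lp U 2 μ) (ℓ : Module.Dual ℝ X)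
    (hℓ : ∀ η, ℓ η ≤ r * ‖η‖ + C * l1Seminorm μ U (A η)) :
    ∃ (x : X) (f : Lp U 2 μ), ‖x‖ ≤ r ∧ (∀ᵐ t ∂μ, ‖f t‖ ≤ C) ∧
      ∀ η, ℓ η = ⟪x, η⟫ + ⟪f, A η⟫ := by
  lift r to NNReal using hr
  lift C to NNReal using hC
  obtain ⟨φ, χ, hφ, hχ, hsplit⟩ := exists_dual_add_comp_of_le_seminorm
    (r • normSeminorm ℝ X) (C • l1Seminorm μ U) A ℓ hℓ
  obtain ⟨x, hx, hφx⟩ := exists_inner_eq_of_abs_le r.2 φ hφ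
  obtain ⟨f, -, hχf⟩ := exists_inner_eq_of_abs_le
    (mul_nonneg C.2 (Real.sqrt_nonneg (μ.real Set.univ))) χ fun u => by
      rw [mul_assoc]
      exact (hχ u).trans (mul_le_mul_of_nonneg_left (l1Seminorm_le u) C.2)
  refine ⟨x, f, hx, ae_norm_le_of_inner_le C.2 f fun u => ?_, fun η => ?_⟩
  · rw [← hχf]
    exact (le_abs_self _).trans (hχ u)
  · rw [hsplit, hφx, hχf]

end Lebesgue

section ControlDuality

variable {Ω : Type*} [MeasurableSpace Ω] {μ : Measure Ω}
  {X U : Type*} [NormedAddCommGroup X] [InnerProductSpace ℝ X] [CompleteSpace X]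
  [NormedAddCommGroup U] [InnerProductSpace ℝ U] [CompleteSpace U] {S : Ω → U →L[ℝ] X}

theorem inner_integral_apply_eq {f : Ω → U} (hf : Integrable (fun t => S t (f t)) μ) (η : X) :
    ⟪∫ t, S t (f t) ∂μ, η⟫ = ∫ t, ⟪f t, (S t).adjoint η⟫ ∂μ := by
  rw [real_inner_comm, ← integral_inner hf η]
  refine integral_congr_ae (Eventually.of_forall fun t => ?_)
  simp only [ContinuousLinearMap.adjoint_inner_right, real_inner_comm]

theorem neg_inner_le_of_norm_add_integral_le {w : X} {r C : ℝ} {f : Ω → U} {η : X}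
    (hSf : Integrable (fun t => S t (f t)) μ)
    (hη : Integrable (fun t => (S t).adjoint η) μ) (hf : ∀ᵐ t ∂μ, ‖f t‖ ≤ C)
    (hr : ‖w + ∫ t, S t (f t) ∂μ‖ ≤ r) :
    -⟪w, η⟫ ≤ r * ‖η‖ + C * ∫ t, ‖(S t).adjoint η‖ ∂μ := by
  have hcontrol : ⟪∫ t, S t (f t) ∂μ, η⟫ ≤ C * ∫ t, ‖(S t).adjoint η‖ ∂μ := by
    rw [inner_integral_apply_eq hSf, ← integral_const_mul]
    refine (Real.le_norm_self _).trans (norm_integral_le_of_norm_le (hη.norm.const_mul C) ?_)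
    filter_upwards [hf] with t ht
    exact (norm_inner_le_norm _ _).trans (by gcongr)
  have hball : -⟪w + ∫ t, S t (f t) ∂μ, η⟫ ≤ r * ‖η‖ := by
    rw [← inner_neg_left]
    refine (real_inner_le_norm _ _).trans ?_
    rw [norm_neg]
    gcongr
  rw [inner_add_left] at hball
  linarith

/-- The observation operator `η ↦ (t ↦ S_t* η)` with values in `L²`, the adjoint of the control
operator `f ↦ ∫ S_t f(t) dt`. -/
noncomputable def observation
    (hS : ∀ η : X, MemLp (fun t => (S t).adjoint η) 2 μ) : X →ₗ[ℝ] Lp U 2 μ where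
  toFun η := (hS η).toLp
  map_add' η ξ := by
    rw [← MemLp.toLp_add]
    simp only [map_add]
    rfl
  map_smul' c η := by
    rw [RingHom.id_apply, ← MemLp.toLp_const_smul]
    simp only [map_smul]
    rfl

theorem coeFn_observation (hS : ∀ η : X, MemLp (fun t => (S t).adjoint η) 2 μ) (η : X) :
    observation hS η =ᵐ[μ] fun t => (S t).adjoint η :=
  (hS η).coeFn_toLp

variable [IsFiniteMeasure μ]

theorem l1Seminorm_observation (hS : ∀ η : X, MemLp (fun t => (S t).adjoint η) 2 μ) (η : X) :
    l1Seminorm μ U (observation hS η) = ∫ t, ‖(S t).adjoint η‖ ∂μ :=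
  integral_congr_ae ((coeFn_observation hS η).mono fun t ht => by simp only [ht])

theorem memLp_adjoint_apply (hS : ∀ η : X, AEStronglyMeasurable (fun t => (S t).adjoint η) μ)
    {M : ℝ} (hM : ∀ᵐ t ∂μ, ‖S t‖ ≤ M) (p : ENNReal) (η : X) :
    MemLp (fun t => (S t).adjoint η) p μ :=
  MemLp.of_bound (hS η) (M * ‖η‖) <| hM.mono fun t ht =>
    ContinuousLinearMap.le_of_opNorm_le _ (by rwa [LinearIsometryEquiv.norm_map]) η

theorem exists_control_norm_add_integral_le_iff
    (hS : ∀ u : U, AEStronglyMeasurable (fun t => S t u) μ)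
    (hS' : ∀ η : X, AEStronglyMeasurable (fun t => (S t).adjoint η) μ)
    {M : ℝ} (hM : ∀ᵐ t ∂μ, ‖S t‖ ≤ M) {r C : ℝ} (hr : 0 ≤ r) (hC : 0 ≤ C) (w : X) :
    (∃ f : Ω → U, AEStronglyMeasurable f μ ∧ (∀ᵐ t ∂μ, ‖f t‖ ≤ C) ∧
        ‖w + ∫ t, S t (f t) ∂μ‖ ≤ r) ↔
      ∀ η, -⟪w, η⟫ ≤ r * ‖η‖ + C * ∫ t, ‖(S t).adjoint η‖ ∂μ := by
  have hobs (p : ENNReal) (η : X) := memLp_adjoint_apply hS' hM p η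
  constructor
  · rintro ⟨f, hf, hfC, hfr⟩ η
    exact neg_inner_le_of_norm_add_integral_le (integrable_apply hS hM (.of_bound hf C hfC))
      ((hobs 1 η).integrable le_rfl) hfC hfr
  · intro h
    obtain ⟨x, f, hx, hfC, hxf⟩ := exists_inner_add_inner_of_le hr hC (observation (hobs 2))
      (-innerₗ X w) fun η => by simpa [l1Seminorm_observation] using h η
    have hreach : w + ∫ t, S t (f t) ∂μ = -x := by
      refine ext_inner_right ℝ fun η => ?_
      have hfη : ⟪f, observation (hobs 2) η⟫ = ∫ t, ⟪f t, (S t).adjoint η⟫ ∂μ := by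
        rw [L2.inner_def]
        exact integral_congr_ae
          ((coeFn_observation (hobs 2) η).mono fun t ht => by simp only [ht])
      have hη : -⟪w, η⟫ = ⟪x, η⟫ + ⟪f, observation (hobs 2) η⟫ := hxf η
      rw [inner_add_left, inner_integral_apply_eq
        (integrable_apply hS hM (integrable_coeFn_of_one_le one_le_two f)), ← hfη, inner_neg_left]
      linarith
    exact ⟨f, Lp.aestronglyMeasurable f, hfC, by rwa [hreach, norm_neg]⟩

end ControlDuality

section Scaling

theorem neg_le_mul_of_forall_quadratic_ge {a b C : ℝ} (ha : 0 ≤ a) (hC : 0 ≤ C)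
    (h : ∀ s : ℝ, 0 ≤ s → -(1 / 2) * C ^ 2 ≤ 1 / 2 * (s * a) ^ 2 + s * b) : -b ≤ C * a := by
  by_contra! hb
  have hb0 : b < 0 := by nlinarith [mul_nonneg hC ha]
  have hquad (s : ℝ) : 0 ≤ 1 / 2 * a ^ 2 * (s * s) + b * s + 1 / 2 * C ^ 2 := by
    obtain hs | hs := le_total 0 s
    · linarith [h s hs]
    · have hbs : 0 ≤ b * s := mul_nonneg_of_nonpos_of_nonpos hb0.le hs
      have hsquares : 0 ≤ 1 / 2 * a ^ 2 * (s * s) + 1 / 2 * C ^ 2 :=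
        add_nonneg (mul_nonneg (by positivity) (mul_self_nonneg s)) (by positivity)
      linarith
  have hdiscrim := discrim_le_zero hquad
  rw [discrim] at hdiscrim
  have hsq : (-b) ^ 2 ≤ (C * a) ^ 2 := by linarith
  exact hb.not_ge (le_of_sq_le_sq hsq (mul_nonneg hC ha))

theorem forall_neg_half_sq_le_iff {E : Type*} [SMul ℝ E] {I L : E → ℝ}
    (hI0 : ∀ x, 0 ≤ I x) (hI : ∀ s : ℝ, 0 ≤ s → ∀ x, I (s • x) = s * I x)
    (hL : ∀ s : ℝ, 0 ≤ s → ∀ x, L (s • x) = s * L x) {C : ℝ} (hC : 0 ≤ C) :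
    (∀ x, -(1 / 2) * C ^ 2 ≤ 1 / 2 * I x ^ 2 + L x) ↔ ∀ x, -L x ≤ C * I x := by
  refine ⟨fun h x => ?_, fun h x => ?_⟩
  · refine neg_le_mul_of_forall_quadratic_ge (hI0 x) hC fun s hs => ?_
    rw [← hI s hs, ← hL s hs]
    exact h (s • x)
  · nlinarith [h x, sq_nonneg (I x - C)]

end Scaling

section Steering

variable {X U : Type*} [NormedAddCommGroup X] [InnerProductSpace ℝ X] [CompleteSpace X]
  [NormedAddCommGroup U] [InnerProductSpace ℝ U] [CompleteSpace U]
  {T : ℝ → X →L[ℝ] X} {B : U →L[ℝ] X} {r : ℝ} {ψ : X} {τ : ℝ}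

/-- The `L^∞` bounds that suffice to steer `ψ` into the closed ball `B(0, r)` at time `τ`: all
`C ≥ 0` such that some control with `‖f(t)‖ ≤ C` almost everywhere does so. The minimal norm
`N*(τ)` is the least element. -/
def steeringBounds (T : ℝ → X →L[ℝ] X) (B : U →L[ℝ] X) (r : ℝ) (ψ : X) (τ : ℝ) : Set ℝ :=
  {C : ℝ | 0 ≤ C ∧ ∃ f : ℝ → U,
    AEStronglyMeasurable f (volume.restrict (Set.Ioo 0 τ)) ∧
    (∀ᵐ t ∂volume.restrict (Set.Ioo 0 τ), ‖f t‖ ≤ C) ∧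
    traj T B ψ f τ ∈ Metric.closedBall (0 : X) r}

theorem mem_steeringBounds_iff_forall_neg_inner_le
    (hT : ∀ x : X, ContinuousOn (fun t => T t x) (Set.Icc 0 τ)) (hr : 0 ≤ r) {C : ℝ}
    (hC : 0 ≤ C) :
    C ∈ steeringBounds T B r ψ τ ↔ ∀ η, -⟪T τ ψ, η⟫ ≤
      r * ‖η‖ + C * ∫ t in Set.Ioc 0 τ, ‖B.adjoint ((T (τ - t)).adjoint η)‖ := by
  have hmaps : Set.MapsTo (fun t => τ - t) (Set.Ioc 0 τ) (Set.Icc 0 τ) := fun t ht =>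
    ⟨sub_nonneg.2 ht.2, sub_le_self τ ht.1.le⟩
  have hS (x : X) : ContinuousOn (fun t => T (τ - t) x) (Set.Ioc 0 τ) :=
    (hT x).comp (by fun_prop) hmaps
  obtain ⟨M, hM⟩ := exists_opNorm_le_of_isCompact isCompact_Icc hT
  have hbound : ∀ᵐ t ∂volume.restrict (Set.Ioc 0 τ), ‖(T (τ - t)).comp B‖ ≤ M * ‖B‖ := by
    filter_upwards [ae_restrict_mem measurableSet_Ioc] with t ht
    exact (ContinuousLinearMap.opNorm_comp_le _ _).trans
      (mul_le_mul_of_nonneg_right (hM _ (hmaps ht)) (norm_nonneg B))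
  have hduality := exists_control_norm_add_integral_le_iff
    (S := fun t => (T (τ - t)).comp B) (μ := volume.restrict (Set.Ioc 0 τ))
    (fun u => (hS (B u)).aestronglyMeasurable measurableSet_Ioc)
    (fun η => aestronglyMeasurable_restrict_of_continuousOn_inner (𝕜 := ℝ) measurableSet_Ioc
      fun u => by
        simpa only [ContinuousLinearMap.adjoint_inner_right, ContinuousLinearMap.comp_apply]
          using (hS (B u)).inner continuousOn_const)
    hbound hr hC (T τ ψ)
  simpa only [steeringBounds, Set.mem_ofPred_eq, hC, true_and, traj, mem_closedBall_zero_iff,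
    restrict_Ioo_eq_restrict_Ioc, ContinuousLinearMap.adjoint_comp,
    ContinuousLinearMap.comp_apply] using hduality

theorem mem_steeringBounds_iff (hT : ∀ x : X, ContinuousOn (fun t => T t x) (Set.Icc 0 τ))
    (hr : 0 ≤ r) {C : ℝ} (hC : 0 ≤ C) :
    C ∈ steeringBounds T B r ψ τ ↔ ∀ η, -(1 / 2) * C ^ 2 ≤ Jfun T B r ψ τ η := by
  let I : X → ℝ := fun η => ∫ t in Set.Ioc 0 τ, ‖B.adjoint ((T (τ - t)).adjoint η)‖
  let L : X → ℝ := fun η => ⟪T τ ψ, η⟫ + r * ‖η‖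
  have hJ (η : X) : Jfun T B r ψ τ η = 1 / 2 * I η ^ 2 + L η := by
    simp only [Jfun, I, L, ContinuousLinearMap.adjoint_inner_right, add_assoc]
  have hI0 (η : X) : 0 ≤ I η := integral_nonneg fun t => norm_nonneg _
  have hI (s : ℝ) (hs : 0 ≤ s) (η : X) : I (s • η) = s * I η := by
    simp only [I, map_smul, norm_smul, Real.norm_of_nonneg hs, integral_const_mul]
  have hL (s : ℝ) (hs : 0 ≤ s) (η : X) : L (s • η) = s * L η := by
    simp only [L, real_inner_smul_right, norm_smul, Real.norm_of_nonneg hs]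
    ring
  rw [mem_steeringBounds_iff_forall_neg_inner_le hT hr hC]
  simp only [hJ]
  rw [forall_neg_half_sq_le_iff hI0 hI hL hC]
  refine forall_congr' fun η => ?_
  rw [neg_add, ← sub_eq_add_neg, sub_le_iff_le_add']

theorem stmt12_general (hT : ∀ x : X, ContinuousOn (fun t => T t x) (Set.Icc 0 τ)) {N : ℝ}
    (hN : IsLeast (steeringBounds T B r ψ τ) N) :
    IsGLB (Set.range (Jfun T B r ψ τ)) (-(1 / 2) * N ^ 2) := by
  obtain ⟨hNmem, hNle⟩ := hN
  have hN0 : 0 ≤ N := hNmem.1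
  have hr : 0 ≤ r := by
    obtain ⟨-, f, -, -, hf⟩ := hNmem
    exact Metric.nonempty_closedBall.1 ⟨_, hf⟩
  refine ⟨Set.forall_mem_range.2 ((mem_steeringBounds_iff hT hr hN0).1 hNmem), fun b hb => ?_⟩
  have hb0 : b ≤ 0 := by simpa [Jfun] using hb (Set.mem_range_self 0)
  have hsqrt : √(-2 * b) ^ 2 = -2 * b := Real.sq_sqrt (by linarith)
  have hmem : √(-2 * b) ∈ steeringBounds T B r ψ τ :=
    (mem_steeringBounds_iff hT hr (Real.sqrt_nonneg _)).2 fun η => by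
      rw [hsqrt]
      linarith [hb (Set.mem_range_self η)]
  have hNsq : N ^ 2 ≤ √(-2 * b) ^ 2 := pow_le_pow_left₀ hN0 (hNle hmem) 2
  linarith

end Steering

/-- Under the assumptions of Statement 11, the optimal value
`V*(τ) = min_η J^τ(η)` satisfies `V*(τ) = -(1/2) N*(τ)²`. -/
theorem stmt12 {X U : Type*} [NormedAddCommGroup X] [InnerProductSpace ℝ X] [CompleteSpace X]
    [NormedAddCommGroup U] [InnerProductSpace ℝ U] [CompleteSpace U]
    (T : ℝ → X →L[ℝ] X) (B : U →L[ℝ] X)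
    (hT0 : T 0 = 1)
    (hTadd : ∀ s t : ℝ, 0 ≤ s → 0 ≤ t → T (s + t) = (T s).comp (T t))
    (hTcont : ∀ x : X, Continuous fun t => T t x)
    -- unique continuation
    (hUC : ∀ η : X, ∀ s : Set ℝ, MeasurableSet s → 0 < volume s →
      (∀ t ∈ s, B.adjoint ((T t).adjoint η) = 0) → η = 0)
    (r : ℝ) (hr : 0 < r) (ψ : X) (τ : ℝ) (hτ : 0 < τ)
    (hTψ : T τ ψ ∉ Metric.closedBall (0 : X) r)
    -- `η̂` is the minimizer of `J^τ`
    (ηh : X) (hηh : ∀ ξ : X, Jfun T B r ψ τ ηh ≤ Jfun T B r ψ τ ξ)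
    -- `N*(τ)` is the minimal `L^∞`-norm of controls steering `ψ` into `B(0,r)` at time `τ`
    (Nstar : ℝ)
    (hNstar : IsLeast {C : ℝ | 0 ≤ C ∧ ∃ f : ℝ → U,
      AEStronglyMeasurable f (volume.restrict (Set.Ioo 0 τ)) ∧
      (∀ᵐ t ∂volume.restrict (Set.Ioo 0 τ), ‖f t‖ ≤ C) ∧
      traj T B ψ f τ ∈ Metric.closedBall (0 : X) r} Nstar) :
    Jfun T B r ψ τ ηh = -(1 / 2) * Nstar ^ 2 := by
  have hmin : IsLeast (Set.range (Jfun T B r ψ τ)) (Jfun T B r ψ τ ηh) :=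
    ⟨Set.mem_range_self ηh, Set.forall_mem_range.2 hηh⟩
  exact hmin.isGLB.unique (stmt12_general (fun x => (hTcont x).continuousOn) hNstar)
end

section
/- (Duality of minimal time and minimal norm.) Under the same assumptions, the minimal norm function N* restricted to (0,τ̂) and the minimal time function τ* are inverse to each other: N*(τ*(M)) = M for every M > 0, and τ*(N*(τ)) = τ for every τ ∈ (0,τ̂). -/
open MeasureTheory Filter

/-!
Time and norm can be traded for each other. If a control of norm `N` brings `ψ` into the ball
`B(0,r)` at time `t`, mixing it with a control that brings `ψ` near the origin at time `t` leads
strictly inside the ball for an arbitrarily small increase of the norm; and strictly inside the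
ball there is room to arrive earlier, by starting the control a little later in its course.
Conversely, an arrival at time `t < τ` leaves the window `(t,τ]` for a control that brings the free
motion near the origin, and mixing the two lowers the norm needed at time `τ`. Controls leading
near the origin exist by the observability inequality: otherwise a functional would separate the
origin from the convex set of states reachable with a fixed norm, against a bang-bang control.
-/

section Duality

open Set Topology

variable {X U : Type*} [NormedAddCommGroup X] [NormedAddCommGroup U]

/-- A strongly continuous semigroup of linear contractions. Only the operators `T t` with `0 ≤ t`
are constrained; negative times merely keep the index set equal to `ℝ`, as in `traj`. -/
structure IsContractionSemigroup [NormedSpace ℝ X] (T : ℝ → X →L[ℝ] X) : Prop where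
  map_zero : T 0 = 1
  map_add : ∀ s t : ℝ, 0 ≤ s → 0 ≤ t → T (s + t) = (T s).comp (T t)
  continuousOn : ∀ x : X, ContinuousOn (fun t => T t x) (Ici 0)
  norm_le_one : ∀ t : ℝ, 0 ≤ t → ‖T t‖ ≤ 1

/-- The control `u` belongs to the closed ball of radius `C` in `L^∞(ℝ; U)`; controls on smaller
time intervals are extended by zero. -/
structure IsBoundedControl (C : ℝ) (u : ℝ → U) : Prop where
  aestronglyMeasurable : AEStronglyMeasurable u volume
  norm_le : ∀ᵐ s, ‖u s‖ ≤ C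

/-- The control that follows `v` up to time `t` and then runs `w` from its time origin. -/
noncomputable def concatControl (t : ℝ) (v w : ℝ → U) : ℝ → U :=
  fun σ => if σ ≤ t then v σ else w (σ - t)

namespace IsBoundedControl

variable {C D : ℝ} {u v w : ℝ → U}

theorem nonneg (hu : IsBoundedControl C u) : 0 ≤ C :=
  let ⟨_, hs⟩ := hu.norm_le.exists
  (norm_nonneg _).trans hs

theorem mono (hu : IsBoundedControl C u) (h : C ≤ D) : IsBoundedControl D u :=
  ⟨hu.aestronglyMeasurable, hu.norm_le.mono fun _ hs => hs.trans h⟩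

theorem add (hv : IsBoundedControl C v) (hw : IsBoundedControl D w) :
    IsBoundedControl (C + D) (v + w) := by
  refine ⟨hv.aestronglyMeasurable.add hw.aestronglyMeasurable, ?_⟩
  filter_upwards [hv.norm_le, hw.norm_le] with s hvs hws
  exact norm_add_le_of_le hvs hws

theorem const_smul [NormedSpace ℝ U] (hu : IsBoundedControl C u) {α : ℝ} (hα : 0 ≤ α) :
    IsBoundedControl (α * C) (α • u) := by
  refine ⟨hu.aestronglyMeasurable.const_smul α, ?_⟩
  filter_upwards [hu.norm_le] with s hs
  rw [Pi.smul_apply, norm_smul, Real.norm_of_nonneg hα]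
  gcongr

theorem comp_add_left (hu : IsBoundedControl C u) (a : ℝ) :
    IsBoundedControl C fun s => u (a + s) :=
  have ha := (measurePreserving_add_left volume a).quasiMeasurePreserving
  ⟨hu.aestronglyMeasurable.comp_quasiMeasurePreserving ha, ha.ae hu.norm_le⟩

theorem indicator {S : Set ℝ} (hS : MeasurableSet S) (hC : 0 ≤ C)
    (hu : AEStronglyMeasurable u (volume.restrict S))
    (hb : ∀ᵐ s ∂volume.restrict S, ‖u s‖ ≤ C) : IsBoundedControl C (S.indicator u) := by
  refine ⟨(aestronglyMeasurable_indicator_iff hS).2 hu, ?_⟩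
  filter_upwards [(ae_restrict_iff' hS).1 hb] with s hs
  rw [norm_indicator_eq_indicator_norm]
  exact indicator_le' (fun _ => hs) (fun _ _ => hC) s

theorem concat (hv : IsBoundedControl C v) (hw : IsBoundedControl C w) (t : ℝ) :
    IsBoundedControl C (concatControl t v w) := by
  have hw' : IsBoundedControl C fun σ => w (σ - t) := by
    simpa only [neg_add_eq_sub] using hw.comp_add_left (-t)
  constructor
  · exact AEStronglyMeasurable.piecewise (s := Iic t) measurableSet_Iic
      hv.aestronglyMeasurable.restrict hw'.aestronglyMeasurable.restrict
  · filter_upwards [hv.norm_le, hw'.norm_le] with σ hvσ hwσ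
    unfold concatControl
    split_ifs <;> assumption

end IsBoundedControl

theorem convex_setOf_isBoundedControl [NormedSpace ℝ U] (C : ℝ) :
    Convex ℝ {u : ℝ → U | IsBoundedControl C u} := by
  intro v hv w hw α β hα hβ hαβ
  have hC : α * C + β * C = C := by rw [← add_mul, hαβ, one_mul]
  exact hC ▸ (hv.const_smul hα).add (hw.const_smul hβ)

/-- Controls that are bounded in `L^∞` by some constant depending on the data steer every state
arbitrarily close to the origin, in every positive time. -/
def IsApproxNullControllable [NormedSpace ℝ X] [CompleteSpace X] [NormedSpace ℝ U]
    (T : ℝ → X →L[ℝ] X) (B : U →L[ℝ] X) : Prop :=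
  ∀ t : ℝ, 0 < t → ∀ ψ : X, ∀ ε : ℝ, 0 < ε →
    ∃ C : ℝ, ∃ u : ℝ → U, IsBoundedControl C u ∧ ‖traj T B ψ u t‖ < ε

/-- Some control on the time set `S` of `L^∞`-norm at most `C` steers `ψ` into `B(0,r)` at
time `t`. The minimal norm is taken over `S = (0,t)`, the minimal time over `S = (0,∞)`. -/
def CanSteer [NormedSpace ℝ X] [CompleteSpace X] [NormedSpace ℝ U]
    (T : ℝ → X →L[ℝ] X) (B : U →L[ℝ] X) (ψ : X) (r : ℝ) (S : Set ℝ) (C t : ℝ) : Prop :=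
  ∃ u : ℝ → U, AEStronglyMeasurable u (volume.restrict S) ∧
    (∀ᵐ s ∂volume.restrict S, ‖u s‖ ≤ C) ∧ traj T B ψ u t ∈ Metric.closedBall (0 : X) r

section Trajectory

variable [NormedSpace ℝ X] [NormedSpace ℝ U] {T : ℝ → X →L[ℝ] X} {B : U →L[ℝ] X}
  {C M N r t τ : ℝ} {u v w : ℝ → U} {ψ : X}

namespace IsContractionSemigroup

theorem norm_apply_le (hT : IsContractionSemigroup T) (ht : 0 ≤ t) (x : X) : ‖T t x‖ ≤ ‖x‖ := by
  simpa only [one_mul] using (T t).le_of_opNorm_le (hT.norm_le_one t ht) x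

theorem apply_add (hT : IsContractionSemigroup T) {s : ℝ} (hs : 0 ≤ s) (ht : 0 ≤ t) (x : X) :
    T (s + t) x = T s (T t x) := by
  rw [hT.map_add s t hs ht, ContinuousLinearMap.comp_apply]

theorem continuous_apply_max (hT : IsContractionSemigroup T) :
    Continuous fun p : ℝ × X => T (max p.1 0) p.2 := by
  refine continuous_prod_of_continuous_lipschitzWith' _ 1 (fun t => ?_) fun x => ?_
  · exact (T (max t 0)).lipschitz.weaken (hT.norm_le_one _ (le_max_right t 0))
  · exact (hT.continuousOn x).comp_continuous (by fun_prop) fun t => le_max_right t 0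

theorem aestronglyMeasurable_apply_sub (hT : IsContractionSemigroup T) {f : ℝ → X}
    (hf : AEStronglyMeasurable f volume) (t : ℝ) :
    AEStronglyMeasurable (fun σ => T (t - σ) (f σ)) (volume.restrict (Iic t)) := by
  have hpair : AEStronglyMeasurable (fun σ : ℝ => (t - σ, f σ)) volume :=
    (Continuous.aestronglyMeasurable (by fun_prop)).prodMk hf
  refine (hT.continuous_apply_max.comp_aestronglyMeasurable hpair).restrict.congr ?_
  filter_upwards [ae_restrict_mem measurableSet_Iic] with σ hσ
  rw [max_eq_left (sub_nonneg.2 hσ)]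

theorem ae_norm_apply_control_le (hT : IsContractionSemigroup T) (hu : IsBoundedControl C u)
    (t : ℝ) : ∀ᵐ σ ∂volume.restrict (Ioc 0 t), ‖T (t - σ) (B (u σ))‖ ≤ ‖B‖ * C := by
  filter_upwards [ae_restrict_of_ae hu.norm_le, ae_restrict_mem measurableSet_Ioc] with σ hσ hσt
  exact (hT.norm_apply_le (sub_nonneg.2 hσt.2) _).trans (B.le_opNorm_of_le hσ)

theorem integrableOn_apply_control (hT : IsContractionSemigroup T) (hu : IsBoundedControl C u)
    (t : ℝ) : IntegrableOn (fun σ => T (t - σ) (B (u σ))) (Ioc 0 t) :=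
  IntegrableOn.of_bound measure_Ioc_lt_top
    ((hT.aestronglyMeasurable_apply_sub
      (B.continuous.comp_aestronglyMeasurable hu.aestronglyMeasurable) t).mono_measure
      (Measure.restrict_mono Ioc_subset_Iic_self le_rfl))
    (‖B‖ * C) (hT.ae_norm_apply_control_le hu t)

end IsContractionSemigroup

variable [CompleteSpace X]

theorem traj_congr (h : EqOn v w (Ioo 0 t)) : traj T B ψ v t = traj T B ψ w t := by
  unfold traj
  rw [integral_Ioc_eq_integral_Ioo, integral_Ioc_eq_integral_Ioo]
  congr 1
  refine setIntegral_congr_fun measurableSet_Ioo fun σ hσ => ?_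
  simp only [h hσ]

theorem traj_of_ae_eq_zero (h : ∀ᵐ s, u s = 0) : traj T B ψ u t = T t ψ := by
  refine add_eq_left.2 (integral_eq_zero_of_ae (ae_restrict_of_ae ?_))
  filter_upwards [h] with σ hσ
  rw [hσ, map_zero, map_zero, Pi.zero_apply]

theorem traj_zero_time (hT : IsContractionSemigroup T) : traj T B ψ u 0 = ψ := by
  simp [traj, hT.map_zero]

theorem traj_sub_traj (x y : X) (u : ℝ → U) (t : ℝ) :
    traj T B x u t - traj T B y u t = T t (x - y) := by
  rw [traj, traj, map_sub, add_sub_add_right_eq_sub]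

theorem traj_smul_add_smul (hT : IsContractionSemigroup T) {D : ℝ} (hv : IsBoundedControl C v)
    (hw : IsBoundedControl D w) (α β : ℝ) (x y : X) (t : ℝ) :
    traj T B (α • x + β • y) (α • v + β • w) t =
      α • traj T B x v t + β • traj T B y w t := by
  simp only [traj, Pi.add_apply, Pi.smul_apply, map_add, map_smul]
  rw [integral_add ((hT.integrableOn_apply_control hv t).fun_smul α)
    ((hT.integrableOn_apply_control hw t).fun_smul β), integral_smul, integral_smul]
  module

theorem traj_add_s16 (hT : IsContractionSemigroup T) (hu : IsBoundedControl C u) {a s : ℝ}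
    (ha : 0 ≤ a) (hs : 0 ≤ s) :
    traj T B ψ u (a + s) = traj T B (traj T B ψ u a) (fun σ => u (a + σ)) s := by
  have has : 0 ≤ a + s := add_nonneg ha hs
  have hint : IntegrableOn (fun σ => T (a + s - σ) (B (u σ))) (Ioc 0 (a + s)) :=
    hT.integrableOn_apply_control hu (a + s)
  have hfirst : ∫ σ in 0..a, T (a + s - σ) (B (u σ)) =
      T s (∫ σ in Ioc 0 a, T (a - σ) (B (u σ))) := by
    rw [intervalIntegral.integral_of_le ha,
      ← (T s).integral_comp_comm (hT.integrableOn_apply_control hu a)]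
    refine setIntegral_congr_fun measurableSet_Ioc fun σ hσ => ?_
    simp only [← hT.apply_add hs (sub_nonneg.2 hσ.2), add_comm a s, add_sub_assoc]
  have hsecond : ∫ σ in a..a + s, T (a + s - σ) (B (u σ)) =
      ∫ σ in Ioc 0 s, T (s - σ) (B (u (a + σ))) := by
    have hshift := intervalIntegral.integral_comp_add_left (a := 0) (b := s)
      (fun σ => T (a + s - σ) (B (u σ))) a
    simpa only [add_sub_add_left_eq_sub, add_zero, intervalIntegral.integral_of_le hs]
      using hshift.symm
  have hsplit : ∫ σ in Ioc 0 (a + s), T (a + s - σ) (B (u σ)) =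
      (∫ σ in 0..a, T (a + s - σ) (B (u σ))) + ∫ σ in a..a + s, T (a + s - σ) (B (u σ)) := by
    have hint' := (intervalIntegrable_iff_integrableOn_Ioc_of_le has).2 hint
    have ha' : a ∈ uIcc 0 (a + s) := by
      rw [uIcc_of_le has]
      exact ⟨ha, le_add_of_nonneg_right hs⟩
    rw [intervalIntegral.integral_add_adjacent_intervals
      (hint'.mono_set (uIcc_subset_uIcc_left ha')) (hint'.mono_set (uIcc_subset_uIcc_right ha')),
      intervalIntegral.integral_of_le has]
  rw [traj, traj, traj, hsplit, hfirst, hsecond, map_add, add_comm a s, hT.apply_add hs ha,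
    add_assoc]

theorem traj_concatControl (hT : IsContractionSemigroup T) (hv : IsBoundedControl C v)
    (hw : IsBoundedControl C w) {s : ℝ} (ht : 0 ≤ t) (hs : 0 ≤ s) :
    traj T B ψ (concatControl t v w) (t + s) = traj T B (traj T B ψ v t) w s := by
  have hv' : EqOn (concatControl t v w) v (Ioo 0 t) := fun σ hσ => if_pos hσ.2.le
  have hw' : EqOn (fun σ => concatControl t v w (t + σ)) w (Ioo 0 s) := fun σ hσ => by
    simp [concatControl, hσ.1]
  rw [traj_add_s16 hT (hv.concat hw t) ht hs, traj_congr hv', traj_congr hw']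

theorem norm_traj_sub_le (hT : IsContractionSemigroup T) (hu : IsBoundedControl C u)
    (ht : 0 ≤ t) : ‖traj T B ψ u t - ψ‖ ≤ ‖T t ψ - ψ‖ + ‖B‖ * C * t := by
  rw [traj, add_sub_right_comm]
  refine norm_add_le_of_le le_rfl ?_
  simpa [ht] using
    norm_setIntegral_le_of_norm_le_const_ae measure_Ioc_lt_top (hT.ae_norm_apply_control_le hu t)

theorem tendsto_traj_nhdsGE_zero (hT : IsContractionSemigroup T) (hu : IsBoundedControl C u) :
    Tendsto (traj T B ψ u) (𝓝[≥] 0) (𝓝 ψ) := by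
  have hcont : ContinuousOn (fun h => ‖T h ψ - ψ‖ + ‖B‖ * C * h) (Ici 0) :=
    ((hT.continuousOn ψ).sub continuousOn_const).norm.add (by fun_prop)
  have hlim := hcont 0 self_mem_Ici
  simp only [ContinuousWithinAt, hT.map_zero, one_apply_eq_self, sub_self,
    norm_zero, mul_zero, add_zero] at hlim
  rw [tendsto_iff_norm_sub_tendsto_zero]
  refine squeeze_zero' (.of_forall fun _ => norm_nonneg _) ?_ hlim
  filter_upwards [self_mem_nhdsWithin] with h hh
  exact norm_traj_sub_le hT hu hh

theorem canSteer_iff_exists_isBoundedControl {S : Set ℝ} (hS : MeasurableSet S)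
    (hSt : Ioo 0 t ⊆ S) (hC : 0 ≤ C) :
    CanSteer T B ψ r S C t ↔ ∃ u, IsBoundedControl C u ∧ ‖traj T B ψ u t‖ ≤ r := by
  simp only [CanSteer, mem_closedBall_zero_iff]
  constructor
  · rintro ⟨u, hu, hub, hur⟩
    have hext : EqOn (S.indicator u) u (Ioo 0 t) := fun s hs => indicator_of_mem (hSt hs) u
    refine ⟨S.indicator u, .indicator hS hC hu hub, ?_⟩
    rwa [traj_congr hext]
  · rintro ⟨u, hu, hur⟩
    exact ⟨u, hu.aestronglyMeasurable.restrict, ae_restrict_of_ae hu.norm_le, hur⟩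

theorem canSteer_Ioo_iff (hC : 0 ≤ C) :
    CanSteer T B ψ r (Ioo 0 t) C t ↔ ∃ u, IsBoundedControl C u ∧ ‖traj T B ψ u t‖ ≤ r :=
  canSteer_iff_exists_isBoundedControl measurableSet_Ioo Subset.rfl hC

theorem canSteer_Ioi_iff (hC : 0 ≤ C) :
    CanSteer T B ψ r (Ioi 0) C t ↔ ∃ u, IsBoundedControl C u ∧ ‖traj T B ψ u t‖ ≤ r :=
  canSteer_iff_exists_isBoundedControl measurableSet_Ioi (fun _ hs => hs.1) hC

theorem exists_earlier_norm_traj_lt (hT : IsContractionSemigroup T) (hw : IsBoundedControl M w)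
    (ht : 0 < t) (hwr : ‖traj T B ψ w t‖ < r) :
    ∃ s, 0 < s ∧ s < t ∧ ∃ u, IsBoundedControl M u ∧ ‖traj T B ψ u s‖ < r := by
  have hsmall : ∀ᶠ h in 𝓝[>] 0, ‖traj T B ψ w h - ψ‖ < r - ‖traj T B ψ w t‖ := by
    have hlim := tendsto_iff_norm_sub_tendsto_zero.1
      (tendsto_traj_nhdsGE_zero (B := B) (ψ := ψ) hT hw)
    exact (hlim.mono_left (nhdsWithin_mono 0 Ioi_subset_Ici_self)).eventually_lt_const
      (sub_pos.2 hwr)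
  obtain ⟨h, hsmall, hh0, hht⟩ := (hsmall.and (Ioo_mem_nhdsGT ht)).exists
  refine ⟨t - h, sub_pos.2 hht, sub_lt_self t hh0, fun σ => w (h + σ), hw.comp_add_left h, ?_⟩
  -- Running `w (h + ·)` from `ψ` instead of `traj T B ψ w h` perturbs the arrival point of `w`
  -- only by the contraction of the initial difference.
  have harrive : traj T B (traj T B ψ w h) (fun σ => w (h + σ)) (t - h) = traj T B ψ w t := by
    rw [← traj_add_s16 hT hw hh0.le (sub_nonneg.2 hht.le), add_sub_cancel]
  have hdiff : ‖traj T B ψ w t - traj T B ψ (fun σ => w (h + σ)) (t - h)‖ ≤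
      ‖traj T B ψ w h - ψ‖ := by
    rw [← harrive, traj_sub_traj]
    exact hT.norm_apply_le (sub_nonneg.2 hht.le) _
  linarith [norm_le_norm_add_norm_sub (traj T B ψ w t) (traj T B ψ (fun σ => w (h + σ)) (t - h))]

theorem IsApproxNullControllable.exists_isBoundedControl_norm_traj_lt
    (hctrl : IsApproxNullControllable T B) (hT : IsContractionSemigroup T) (hr : 0 < r)
    (ht : 0 < t) (hv : IsBoundedControl N v) (hvr : ‖traj T B ψ v t‖ ≤ r) (hNM : N < M) :
    ∃ u, IsBoundedControl M u ∧ ‖traj T B ψ u t‖ < r := by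
  obtain ⟨C, g, hg, hgr⟩ := hctrl t ht ψ r hr
  have hN := hv.nonneg
  have hC := hg.nonneg
  obtain ⟨l, hl0, hl1, hlC⟩ : ∃ l : ℝ, 0 < l ∧ l ≤ 1 ∧ l * C ≤ M - N := by
    have hd : 0 < M - N + C := by linarith
    refine ⟨(M - N) / (M - N + C), div_pos (by linarith) hd, (div_le_one hd).2 (by linarith), ?_⟩
    rw [div_mul_eq_mul_div, div_le_iff₀ hd]
    nlinarith
  have hl : 0 ≤ 1 - l := sub_nonneg.2 hl1
  refine ⟨(1 - l) • v + l • g, ((hv.const_smul hl).add (hg.const_smul hl0.le)).mono ?_, ?_⟩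
  · nlinarith
  · have hmix := traj_smul_add_smul (B := B) hT hv hg (1 - l) l ψ ψ t
    rw [Convex.combo_self (sub_add_cancel 1 l)] at hmix
    calc ‖traj T B ψ ((1 - l) • v + l • g) t‖
        ≤ (1 - l) * ‖traj T B ψ v t‖ + l * ‖traj T B ψ g t‖ := by
          rw [hmix]
          refine (norm_add_le _ _).trans_eq ?_
          rw [norm_smul, norm_smul, Real.norm_of_nonneg hl, Real.norm_of_nonneg hl0.le]
      _ < (1 - l) * r + l * r :=
          add_lt_add_of_le_of_lt (mul_le_mul_of_nonneg_left hvr hl) (mul_lt_mul_of_pos_left hgr hl0)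
      _ = r := by ring

theorem IsApproxNullControllable.exists_lt_isBoundedControl_norm_traj_le
    (hctrl : IsApproxNullControllable T B) (hT : IsContractionSemigroup T) (hr : 0 < r)
    (ht : 0 ≤ t) (htτ : t < τ) (hN : 0 < N) (hv : IsBoundedControl N v)
    (hvr : ‖traj T B ψ v t‖ ≤ r) :
    ∃ M < N, ∃ u, IsBoundedControl M u ∧ ‖traj T B ψ u τ‖ ≤ r := by
  have hs : 0 < τ - t := sub_pos.2 htτ
  obtain ⟨C, g, hg, hgr⟩ := hctrl (τ - t) hs (T t ψ) r hr
  have hC := hg.nonneg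
  have hzero : IsBoundedControl 0 (0 : ℝ → U) := ⟨aestronglyMeasurable_zero, by simp⟩
  -- `l` balances the cost `(1 - l) * N` before time `t` against the cost `l * C` after it.
  obtain ⟨l, hl0, hl1, hlC⟩ : ∃ l : ℝ, 0 < l ∧ l ≤ 1 ∧ l * C = (1 - l) * N := by
    have hd : 0 < N + C := by linarith
    refine ⟨N / (N + C), by positivity, (div_le_one hd).2 (by linarith), ?_⟩
    field_simp
    ring
  have hl : 0 ≤ 1 - l := sub_nonneg.2 hl1
  have hbefore : IsBoundedControl ((1 - l) * N) ((1 - l) • v) := hv.const_smul hl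
  have hafter : IsBoundedControl ((1 - l) * N) (l • g) := hlC ▸ hg.const_smul hl0.le
  have hmid : traj T B ψ ((1 - l) • v) t = (1 - l) • traj T B ψ v t + l • T t ψ := by
    have h := traj_smul_add_smul (B := B) hT hv hzero (1 - l) l ψ ψ t
    rwa [Convex.combo_self (sub_add_cancel 1 l), smul_zero, add_zero,
      traj_of_ae_eq_zero (u := 0) (by simp)] at h
  have hend : traj T B ψ (concatControl t ((1 - l) • v) (l • g)) τ =
      (1 - l) • T (τ - t) (traj T B ψ v t) + l • traj T B (T t ψ) g (τ - t) := by
    have h := traj_smul_add_smul (B := B) hT hzero hg (1 - l) l (traj T B ψ v t) (T t ψ) (τ - t)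
    rw [smul_zero, zero_add, traj_of_ae_eq_zero (u := 0) (by simp)] at h
    rw [← h, ← hmid, ← traj_concatControl hT hbefore hafter ht hs.le, add_sub_cancel]
  refine ⟨(1 - l) * N, by nlinarith, _, hbefore.concat hafter t, ?_⟩
  rw [hend, ← mem_closedBall_zero_iff]
  exact convex_closedBall 0 r
    (mem_closedBall_zero_iff.2 ((hT.norm_apply_le hs.le _).trans hvr))
    (mem_closedBall_zero_iff.2 hgr.le) hl hl0.le (sub_add_cancel 1 l)

end Trajectory

section Observability

variable [InnerProductSpace ℝ X] [CompleteSpace X] [InnerProductSpace ℝ U]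

theorem zero_mem_closure_of_forall_exists_inner_nonneg {R : Set X} (hR : Convex ℝ R)
    (h : ∀ η : X, ∃ x ∈ R, 0 ≤ inner ℝ η x) : (0 : X) ∈ closure R := by
  by_contra hnot
  obtain ⟨f, c, hfR, hf0⟩ :=
    geometric_hahn_banach_closed_point hR.closure isClosed_closure hnot
  obtain ⟨η, rfl⟩ := (InnerProductSpace.toDual ℝ X).surjective f
  obtain ⟨x, hxR, hx⟩ := h η
  have hneg := (hfR x (subset_closure hxR)).trans hf0
  rw [InnerProductSpace.toDual_apply_apply, map_zero] at hneg
  exact hneg.not_ge hx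

theorem exists_isBoundedControl_inner_eq_mul_norm {S : Set ℝ} (hS : MeasurableSet S) {C : ℝ}
    (hC : 0 ≤ C) {v : ℝ → U} (hv : AEStronglyMeasurable v (volume.restrict S)) :
    ∃ u, IsBoundedControl C u ∧ ∀ s ∈ S, inner ℝ (v s) (u s) = C * ‖v s‖ := by
  have hmeas : AEStronglyMeasurable (fun s => C • ‖v s‖⁻¹ • v s) (volume.restrict S) :=
    (hv.norm.aemeasurable.inv.aestronglyMeasurable.smul hv).const_smul C
  have hbound : ∀ s, ‖C • ‖v s‖⁻¹ • v s‖ ≤ C := fun s => by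
    rw [norm_smul, norm_smul, norm_inv, norm_norm, Real.norm_of_nonneg hC]
    exact mul_le_of_le_one_right hC inv_mul_le_one
  refine ⟨_, .indicator hS hC hmeas (.of_forall hbound), fun s hs => ?_⟩
  rw [indicator_of_mem hs, inner_smul_right, inner_smul_right, real_inner_self_eq_norm_sq, sq,
    ← mul_assoc ‖v s‖⁻¹, inv_mul_mul_self]

theorem norm_adjoint_apply_sub_sq_le {A : X →L[ℝ] X} (hA : ‖A‖ ≤ 1) (η : X) :
    ‖A.adjoint η - η‖ ^ 2 ≤ 2 * ‖η‖ * ‖A η - η‖ := by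
  have hadj : ‖A.adjoint η‖ ≤ ‖η‖ := by
    have hA' : ‖A.adjoint‖ ≤ 1 := by rwa [LinearIsometryEquiv.norm_map]
    simpa only [one_mul] using A.adjoint.le_of_opNorm_le hA' η
  calc ‖A.adjoint η - η‖ ^ 2
      = ‖A.adjoint η‖ ^ 2 - 2 * inner ℝ η (A η) + ‖η‖ ^ 2 := by
        rw [norm_sub_sq_real, ContinuousLinearMap.adjoint_inner_left]
    _ ≤ ‖η‖ ^ 2 - 2 * inner ℝ η (A η) + ‖η‖ ^ 2 := by gcongr
    _ = 2 * inner ℝ η (η - A η) := by rw [inner_sub_right, real_inner_self_eq_norm_sq]; ring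
    _ ≤ 2 * (‖η‖ * ‖η - A η‖) := by gcongr; exact real_inner_le_norm η _
    _ = 2 * ‖η‖ * ‖A η - η‖ := by rw [norm_sub_rev, mul_assoc]

namespace IsContractionSemigroup

variable {T : ℝ → X →L[ℝ] X}

theorem norm_adjoint_apply_sub_le (hT : IsContractionSemigroup T) {s t : ℝ} (hs : 0 ≤ s)
    (ht : 0 ≤ t) (η : X) :
    ‖(T t).adjoint η - (T s).adjoint η‖ ≤ ‖(T |t - s|).adjoint η - η‖ := by
  wlog hst : s ≤ t generalizing s t
  · rw [norm_sub_rev, abs_sub_comm]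
    exact this ht hs (le_of_not_ge hst)
  have hts : 0 ≤ t - s := sub_nonneg.2 hst
  have hsplit : (T t).adjoint η = (T s).adjoint ((T (t - s)).adjoint η) := by
    rw [← ContinuousLinearMap.comp_apply, ← ContinuousLinearMap.adjoint_comp,
      ← hT.map_add _ _ hts hs, sub_add_cancel]
  have hadj : ‖(T s).adjoint‖ ≤ 1 := by
    rw [LinearIsometryEquiv.norm_map]
    exact hT.norm_le_one s hs
  rw [hsplit, ← map_sub, abs_of_nonneg hts]
  simpa only [one_mul] using (T s).adjoint.le_of_opNorm_le hadj _

theorem continuousOn_adjoint_apply (hT : IsContractionSemigroup T) (η : X) :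
    ContinuousOn (fun t => (T t).adjoint η) (Ici 0) := by
  intro s hs
  have hlim : Tendsto (fun t => √(2 * ‖η‖ * ‖T |t - s| η - η‖)) (𝓝[Ici 0] s) (𝓝 0) := by
    have hcont : Continuous fun t => √(2 * ‖η‖ * ‖T |t - s| η - η‖) := by
      have horbit : Continuous fun t => T |t - s| η :=
        (hT.continuousOn η).comp_continuous (by fun_prop) fun t => mem_Ici.2 (abs_nonneg _)
      exact ((horbit.sub continuous_const).norm.const_mul _).sqrt
    simpa [hT.map_zero] using (hcont.tendsto s).mono_left nhdsWithin_le_nhds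
  rw [ContinuousWithinAt, tendsto_iff_norm_sub_tendsto_zero]
  refine squeeze_zero' (.of_forall fun _ => norm_nonneg _) ?_ hlim
  filter_upwards [self_mem_nhdsWithin] with t ht
  exact (hT.norm_adjoint_apply_sub_le hs ht η).trans
    (Real.le_sqrt_of_sq_le (norm_adjoint_apply_sub_sq_le (hT.norm_le_one _ (abs_nonneg _)) η))

end IsContractionSemigroup

variable [CompleteSpace U] {T : ℝ → X →L[ℝ] X} {B : U →L[ℝ] X}

theorem inner_traj (hT : IsContractionSemigroup T) {C : ℝ} {u : ℝ → U}
    (hu : IsBoundedControl C u) (η ψ : X) (t : ℝ) :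
    inner ℝ η (traj T B ψ u t) = inner ℝ η (T t ψ) +
      ∫ σ in Ioc 0 t, inner ℝ (B.adjoint ((T (t - σ)).adjoint η)) (u σ) := by
  rw [traj, inner_add_right, ← integral_inner (hT.integrableOn_apply_control hu t)]
  simp only [ContinuousLinearMap.adjoint_inner_left]

theorem exists_isBoundedControl_inner_traj_nonneg (hT : IsContractionSemigroup T) {κ τ : ℝ}
    (hκ : 0 ≤ κ) (hτ : 0 ≤ τ) {η : X}
    (hobs : ‖(T τ).adjoint η‖ ≤ κ * ∫ t in Ioc 0 τ, ‖B.adjoint ((T t).adjoint η)‖) (ψ : X) :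
    ∃ u, IsBoundedControl (κ * ‖ψ‖) u ∧ 0 ≤ inner ℝ η (traj T B ψ u τ) := by
  set v : ℝ → U := fun σ => B.adjoint ((T (τ - σ)).adjoint η)
  have hv : ContinuousOn v (Ioc 0 τ) :=
    B.adjoint.continuous.comp_continuousOn ((hT.continuousOn_adjoint_apply η).comp
      (by fun_prop) fun σ hσ => sub_nonneg.2 hσ.2)
  obtain ⟨u, hu, huv⟩ := exists_isBoundedControl_inner_eq_mul_norm measurableSet_Ioc
    (mul_nonneg hκ (norm_nonneg ψ)) (hv.aestronglyMeasurable measurableSet_Ioc)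
  have hreflect : ∫ σ in Ioc 0 τ, ‖v σ‖ = ∫ t in Ioc 0 τ, ‖B.adjoint ((T t).adjoint η)‖ := by
    simpa only [sub_self, sub_zero, intervalIntegral.integral_of_le hτ] using
      intervalIntegral.integral_comp_sub_left (a := 0) (b := τ)
        (fun t => ‖B.adjoint ((T t).adjoint η)‖) τ
  have hbang : ∫ σ in Ioc 0 τ, inner ℝ (v σ) (u σ) =
      ‖ψ‖ * (κ * ∫ t in Ioc 0 τ, ‖B.adjoint ((T t).adjoint η)‖) := by
    rw [setIntegral_congr_fun measurableSet_Ioc huv, integral_const_mul, hreflect]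
    ring
  refine ⟨u, hu, ?_⟩
  have hfree : -(‖ψ‖ * ‖(T τ).adjoint η‖) ≤ inner ℝ η (T τ ψ) := by
    rw [← ContinuousLinearMap.adjoint_inner_left, mul_comm]
    exact neg_le_of_abs_le (abs_real_inner_le_norm _ _)
  rw [inner_traj hT hu, hbang]
  linarith [mul_le_mul_of_nonneg_left hobs (norm_nonneg ψ)]

theorem isApproxNullControllable_of_observability (hT : IsContractionSemigroup T) {K : ℝ → ℝ}
    (hK : ∀ τ : ℝ, 0 < τ → 0 ≤ K τ)
    (hobs : ∀ τ : ℝ, 0 < τ → ∀ η : X,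
      ‖(T τ).adjoint η‖ ≤ K τ * ∫ t in Ioc 0 τ, ‖B.adjoint ((T t).adjoint η)‖) :
    IsApproxNullControllable T B := by
  intro τ hτ ψ ε hε
  set C := K τ * ‖ψ‖
  have hconv : Convex ℝ ((fun u => traj T B ψ u τ) '' {u | IsBoundedControl C u}) := by
    rintro _ ⟨v, hv, rfl⟩ _ ⟨w, hw, rfl⟩ α β hα hβ hαβ
    refine ⟨α • v + β • w, convex_setOf_isBoundedControl C hv hw hα hβ hαβ, ?_⟩
    have hcombo := traj_smul_add_smul (B := B) hT hv hw α β ψ ψ τ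
    rwa [Convex.combo_self hαβ] at hcombo
  have hzero := zero_mem_closure_of_forall_exists_inner_nonneg hconv fun η => by
    obtain ⟨u, hu, hη⟩ :=
      exists_isBoundedControl_inner_traj_nonneg hT (hK τ hτ) hτ.le (hobs τ hτ η) ψ
    exact ⟨_, mem_image_of_mem _ hu, hη⟩
  obtain ⟨_, ⟨u, hu, rfl⟩, hdist⟩ := Metric.mem_closure_iff.1 hzero ε hε
  exact ⟨C, u, hu, by rwa [dist_zero_left] at hdist⟩

end Observability

section MinimalTimeAndNorm

variable [NormedSpace ℝ X] [CompleteSpace X] [NormedSpace ℝ U] {T : ℝ → X →L[ℝ] X}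
  {B : U →L[ℝ] X} {r : ℝ} {ψ : X} {Nstar τstar : ℝ → ℝ}

theorem minimalNorm_minimalTime (hT : IsContractionSemigroup T)
    (hctrl : IsApproxNullControllable T B) (hr : 0 < r) (hψ : r < ‖ψ‖)
    (hNstar : ∀ τ : ℝ, 0 < τ →
      IsLeast {C : ℝ | 0 ≤ C ∧ CanSteer T B ψ r (Ioo 0 τ) C τ} (Nstar τ))
    {M t : ℝ} (hM : 0 < M)
    (ht : IsLeast {t : ℝ | 0 ≤ t ∧ CanSteer T B ψ r (Ioi 0) M t} t) : Nstar t = M := by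
  obtain ⟨⟨ht0, hsteer⟩, hmin⟩ := ht
  obtain ⟨u, hu, hur⟩ := (canSteer_Ioi_iff hM.le).1 hsteer
  have htpos : 0 < t := ht0.lt_of_ne' fun h => by
    rw [h, traj_zero_time hT] at hur
    exact hψ.not_ge hur
  obtain ⟨⟨hN0, hN⟩, hNmin⟩ := hNstar t htpos
  refine (hNmin ⟨hM.le, (canSteer_Ioo_iff hM.le).2 ⟨u, hu, hur⟩⟩).antisymm (not_lt.1 fun hlt => ?_)
  obtain ⟨v, hv, hvr⟩ := (canSteer_Ioo_iff hN0).1 hN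
  obtain ⟨w, hw, hwr⟩ := hctrl.exists_isBoundedControl_norm_traj_lt hT hr htpos hv hvr hlt
  obtain ⟨s, hs0, hst, w', hw', hwr'⟩ := exists_earlier_norm_traj_lt hT hw htpos hwr
  exact hst.not_ge (hmin ⟨hs0.le, (canSteer_Ioi_iff hM.le).2 ⟨w', hw', hwr'.le⟩⟩)

theorem minimalTime_minimalNorm (hT : IsContractionSemigroup T)
    (hctrl : IsApproxNullControllable T B) (hr : 0 < r)
    (hτstar : ∀ M : ℝ, 0 < M →
      IsLeast {t : ℝ | 0 ≤ t ∧ CanSteer T B ψ r (Ioi 0) M t} (τstar M))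
    {τ N : ℝ} (hτ : 0 < τ) (hψτ : r < ‖T τ ψ‖)
    (hN : IsLeast {C : ℝ | 0 ≤ C ∧ CanSteer T B ψ r (Ioo 0 τ) C τ} N) : τstar N = τ := by
  obtain ⟨⟨hN0, hsteer⟩, hmin⟩ := hN
  obtain ⟨u, hu, hur⟩ := (canSteer_Ioo_iff hN0).1 hsteer
  have hNpos : 0 < N := hN0.lt_of_ne' fun h => by
    rw [traj_of_ae_eq_zero (hu.norm_le.mono fun s hs => norm_le_zero_iff.1 (h ▸ hs))] at hur
    exact hψτ.not_ge hur
  obtain ⟨⟨ht0, ht⟩, htmin⟩ := hτstar N hNpos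
  refine (htmin ⟨hτ.le, (canSteer_Ioi_iff hN0).2 ⟨u, hu, hur⟩⟩).antisymm (not_lt.1 fun hlt => ?_)
  obtain ⟨v, hv, hvr⟩ := (canSteer_Ioi_iff hN0).1 ht
  obtain ⟨M, hMN, w, hw, hwr⟩ :=
    hctrl.exists_lt_isBoundedControl_norm_traj_le hT hr ht0 hlt hNpos hv hvr
  exact hMN.not_ge (hmin ⟨hw.nonneg, (canSteer_Ioo_iff hw.nonneg).2 ⟨w, hw, hwr⟩⟩)

end MinimalTimeAndNorm

end Duality

/-- By contractivity, `r < ‖T τ ψ‖` says that `τ < τ̂`. -/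
theorem stmt16_general {X U : Type*} [NormedAddCommGroup X] [NormedSpace ℝ X] [CompleteSpace X]
    [NormedAddCommGroup U] [NormedSpace ℝ U] {T : ℝ → X →L[ℝ] X} {B : U →L[ℝ] X}
    (hT : IsContractionSemigroup T) (hctrl : IsApproxNullControllable T B)
    {r : ℝ} (hr : 0 < r) {ψ : X} (hψ : r < ‖ψ‖) {Nstar τstar : ℝ → ℝ}
    (hNstar : ∀ τ : ℝ, 0 < τ →
      IsLeast {C : ℝ | 0 ≤ C ∧ CanSteer T B ψ r (Set.Ioo 0 τ) C τ} (Nstar τ))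
    (hτstar : ∀ M : ℝ, 0 < M →
      IsLeast {t : ℝ | 0 ≤ t ∧ CanSteer T B ψ r (Set.Ioi 0) M t} (τstar M)) :
    (∀ M : ℝ, 0 < M → Nstar (τstar M) = M) ∧
      (∀ τ : ℝ, 0 < τ → r < ‖T τ ψ‖ → τstar (Nstar τ) = τ) :=
  ⟨fun M hM => minimalNorm_minimalTime hT hctrl hr hψ hNstar hM (hτstar M hM),
    fun τ hτ hψτ => minimalTime_minimalNorm hT hctrl hr hτstar hτ hψτ (hNstar τ hτ)⟩

/-- (Duality of minimal time and minimal norm.) Under the same assumptions,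
the minimal norm function `N*` restricted to `(0,τ̂)` and the minimal time function `τ*` are
inverse to each other: `N*(τ*(M)) = M` for every `M > 0` and `τ*(N*(τ)) = τ` for every
`τ ∈ (0,τ̂)`. -/
theorem stmt16 {X U : Type*} [NormedAddCommGroup X] [InnerProductSpace ℝ X] [CompleteSpace X]
    [NormedAddCommGroup U] [InnerProductSpace ℝ U] [CompleteSpace U]
    (T : ℝ → X →L[ℝ] X) (B : U →L[ℝ] X)
    -- `T` is a `C₀`-semigroup of contractions (generated by `-A`)
    (hT0 : T 0 = 1)
    (hTadd : ∀ s t : ℝ, 0 ≤ s → 0 ≤ t → T (s + t) = (T s).comp (T t))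
    (hTcont : ∀ x : X, Continuous fun t => T t x)
    (hTcontr : ∀ t : ℝ, 0 ≤ t → ‖T t‖ ≤ 1)
    -- the `L¹` observability inequality `K(τ) ∫_0^τ ‖B*T*_t η‖ dt ≥ ‖T*_τ η‖`
    (K : ℝ → ℝ) (hK_pos : ∀ τ : ℝ, 0 < τ → 0 < K τ) (hK_cont : ContinuousOn K (Set.Ioi 0))
    (hobs : ∀ τ : ℝ, 0 < τ → ∀ η : X,
      ‖(T τ).adjoint η‖ ≤ K τ * ∫ t in Set.Ioc 0 τ, ‖B.adjoint ((T t).adjoint η)‖)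
    (r : ℝ) (hr : 0 < r) (ψ : X) (hψ : ψ ∉ Metric.closedBall (0 : X) r)
    -- `N*(τ)` is the minimal `L^∞`-norm of controls steering `ψ` into `B(0,r)` at time `τ`
    (Nstar : ℝ → ℝ)
    (hNstar : ∀ τ : ℝ, 0 < τ → IsLeast {C : ℝ | 0 ≤ C ∧ ∃ f : ℝ → U,
      AEStronglyMeasurable f (volume.restrict (Set.Ioo 0 τ)) ∧
      (∀ᵐ t ∂volume.restrict (Set.Ioo 0 τ), ‖f t‖ ≤ C) ∧
      traj T B ψ f τ ∈ Metric.closedBall (0 : X) r} (Nstar τ))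
    -- `τ*(M)` is the minimal time with controls bounded by `M`
    (τstar : ℝ → ℝ)
    (hτstar : ∀ M : ℝ, 0 < M → IsLeast {t : ℝ | 0 ≤ t ∧ ∃ u : ℝ → U,
      AEStronglyMeasurable u (volume.restrict (Set.Ioi 0)) ∧
      (∀ᵐ s ∂volume.restrict (Set.Ioi 0), ‖u s‖ ≤ M) ∧
      traj T B ψ u t ∈ Metric.closedBall (0 : X) r} (τstar M)) :
    (∀ M : ℝ, 0 < M → Nstar (τstar M) = M) ∧
      (∀ τ : ℝ, 0 < τ → (∀ s ∈ Set.Ioc (0 : ℝ) τ, r < ‖T s ψ‖) → τstar (Nstar τ) = τ) := by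
  have hT : IsContractionSemigroup T := ⟨hT0, hTadd, fun x => (hTcont x).continuousOn, hTcontr⟩
  have hctrl := isApproxNullControllable_of_observability hT (fun τ hτ => (hK_pos τ hτ).le) hobs
  have hψ' : r < ‖ψ‖ := by rwa [mem_closedBall_zero_iff, not_le] at hψ
  exact (stmt16_general hT hctrl hr hψ' hNstar hτstar).imp_right fun h τ hτ hfree =>
    h τ hτ (hfree τ ⟨hτ, le_rfl⟩)
end
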